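/- Suppose C(x,y) = y₁·F(x₁,…,x_r) + Σ_{j=1}^{m} x_j q_j(y) + R(y) with F a nonsingular positive definite integral quadratic form in r variables, 5 ≤ r ≤ m, matrix M and determinant Δ, and suppose y₁ divides q_i(y) in ℤ[y] for every 1 ≤ i ≤ r. For z = (z₂,…,z_h) write (1,z) = (1,z₂,…,z_h) and set s(z) = (q₁(1,z),…,q_r(1,z)); let F^{−1} denote the quadratic form with matrix M^{−1} and adj M the adjugate of M. Assume that either (i) r < m and there exist z ∈ ℝ^{h−1} and r+1 ≤ j ≤ m with q_j(0,z) ≠ 0, or (ii) r = m and there exists z ∈ ℝ^{h−1} with R(0,z) ≠ 0. Then there exist c > 0 and B₀ such that for every B ≥ B₀ there is a set 𝒞 ⊆ (ℤ^{m−r} × ℤ^{h−1}) ∩ [−B,B]^{n−r−1} with |𝒞| ≥ c·B^{(2/3)(n−r−1)} such that for every (w_{r+1},…,w_m, z₂,…,z_h) ∈ 𝒞: (a) Σ_{i=r+1}^{m} w_i q_i(1,z) − Δ·R(1,z) ≥ B²/4, and (b) there exists x ∈ ℤ^r with F(x + (adj M)·s(z)) = Δ²·(F^{−1}(s(z)) −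 4R(1,z)) + Δ·Σ_{i=r+1}^{m} w_i q_i(1,z). -/

import Mathlib

open Matrix MvPolynomial

/-!
The shift by `(adj M) s(z)` permutes `ℤ^r`, so (b) asks `F` to represent the integer
`f(w, z) = F((adj M) s(z)) + Δ (∑ wᵢ qᵢ(1, z) - 4 Δ R(1, z))`.

A positive definite form in at least five variables represents all large `n` in a fixed progression
around any `n₀ ≠ 0` which it represents locally. Indeed, an orthogonal basis turns the equation into
a diagonal one `∑ (aᵢ tᵢ² + lᵢ tᵢ) = N`, arranged so that every small prime divides some `aᵢ` but
not `lᵢ`; the terms of the singular series with such a prime in the denominator vanish, and the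
others are small next to the leading term. The circle method on the horizontal line at height
`1 / N`, dissected by Ford discs, then gives solutions for large `N`.

Locally `f(w, z)` is represented as soon as `4 Δ` divides `w`: in at least five variables the form
is isotropic over every `ℚ_p`, and along an isotropic direction the equation is linear. Fix such a
point `t` with `f(t) > 0`. The cubic forms `∑ wᵢ qᵢ(τ, z) - a R(τ, z)`, for `a = Δ` and `a = 4 Δ`,
are both positive at some point with `τ = 0`, hence they are `≫ B³` on `≫ B^(n - r - 1)` integer
points with `τ = 1` congruent to `t`, and these points satisfy both (a) and (b).
-/

section GaussSums

variable {R : Type*} [CommRing R] [Fintype R] {ψ : AddChar R ℂ}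

/-- The quadratic Gauss sum `∑ b, ψ (A b² + B b)` of an additive character `ψ` of a finite
commutative ring. -/
noncomputable def quadGaussSum (ψ : AddChar R ℂ) (A B : R) : ℂ :=
  ∑ b, ψ (A * b ^ 2 + B * b)

lemma quadGaussSum_mul_conj [DecidableEq R] (hψ : ψ.IsPrimitive) (A B : R) :
    quadGaussSum ψ A B * starRingEnd ℂ (quadGaussSum ψ A B) =
      ∑ u, ψ (A * u ^ 2 + B * u) * if 2 * A * u = 0 then (Fintype.card R : ℂ) else 0 := by
  have conj_term (c u : R) : ψ (A * (c + u) ^ 2 + B * (c + u)) *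
      starRingEnd ℂ (ψ (A * c ^ 2 + B * c)) = ψ (A * u ^ 2 + B * u) * ψ (c * (2 * A * u)) := by
    rw [← AddChar.map_neg_eq_conj, ← AddChar.map_add_eq_mul, ← AddChar.map_add_eq_mul]
    ring_nf
  calc quadGaussSum ψ A B * starRingEnd ℂ (quadGaussSum ψ A B)
      = ∑ c, ∑ b, ψ (A * b ^ 2 + B * b) * starRingEnd ℂ (ψ (A * c ^ 2 + B * c)) := by
        rw [quadGaussSum, map_sum, Finset.sum_mul_sum, Finset.sum_comm]
    _ = ∑ c, ∑ u, ψ (A * u ^ 2 + B * u) * ψ (c * (2 * A * u)) := by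
        refine Finset.sum_congr rfl fun c _ ↦ ?_
        rw [← Equiv.sum_comp (Equiv.addLeft c)]
        exact Finset.sum_congr rfl fun u _ ↦ conj_term c u
    _ = _ := by
        rw [Finset.sum_comm]
        simp_rw [← Finset.mul_sum, AddChar.sum_mulShift _ hψ, Nat.cast_ite, Nat.cast_zero]

lemma norm_quadGaussSum_sq_le [DecidableEq R] (hψ : ψ.IsPrimitive) (A B : R) :
    ‖quadGaussSum ψ A B‖ ^ 2 ≤ Fintype.card R * (Finset.univ.filter (2 * A * · = 0)).card := by
  calc ‖quadGaussSum ψ A B‖ ^ 2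
      = ‖quadGaussSum ψ A B * starRingEnd ℂ (quadGaussSum ψ A B)‖ := by
        rw [norm_mul, RCLike.norm_conj, sq]
    _ ≤ ∑ u, if 2 * A * u = 0 then (Fintype.card R : ℝ) else 0 := by
        rw [quadGaussSum_mul_conj hψ]
        refine norm_sum_le_of_le _ fun u _ ↦ ?_
        rw [norm_mul, AddChar.norm_apply, one_mul]
        split_ifs <;> simp
    _ = _ := by rw [← Finset.sum_filter, Finset.sum_const, nsmul_eq_mul, mul_comm]

lemma norm_quadGaussSum_le_sqrt_of_isUnit (hψ : ψ.IsPrimitive) {A : R} (hA : IsUnit (2 * A))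
    (B : R) : ‖quadGaussSum ψ A B‖ ≤ √(Fintype.card R) := by
  classical
  refine Real.le_sqrt_of_sq_le ((norm_quadGaussSum_sq_le hψ A B).trans_eq ?_)
  have kernel : Finset.univ.filter (2 * A * · = 0) = {0} := by
    ext u
    simp [hA.mul_right_eq_zero]
  simp [kernel]

-- Shifting the variable of summation by `d` multiplies the sum by `ψ (B d)`.
lemma quadGaussSum_eq_zero {A B d : R} (hA : A * d = 0) (hB : ψ (B * d) ≠ 1) :
    quadGaussSum ψ A B = 0 := by
  have shift : quadGaussSum ψ A B = ψ (B * d) * quadGaussSum ψ A B := by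
    conv_lhs => rw [quadGaussSum, ← Equiv.sum_comp (Equiv.addRight d)]
    rw [quadGaussSum, Finset.mul_sum]
    refine Finset.sum_congr rfl fun b _ ↦ ?_
    rw [← AddChar.map_add_eq_mul, Equiv.coe_addRight]
    congr 1
    linear_combination (2 * b + d) * hA
  by_contra h
  exact hB (mul_right_cancel₀ h (by rw [one_mul, ← shift]))

variable {q : ℕ} [NeZero q]

lemma norm_quadGaussSum_zmod_le {a h : ℤ} (ha : 0 < a) (hh : IsCoprime h q) (B : ZMod q) :
    ‖quadGaussSum ZMod.stdAddChar (h * a : ZMod q) B‖ ≤ √(q * (2 * a)) := by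
  classical
  refine Real.le_sqrt_of_sq_le
    ((norm_quadGaussSum_sq_le (ZMod.isPrimitive_stdAddChar q) _ B).trans ?_)
  lift a to ℕ using ha.le
  have torsion : Finset.univ.filter (fun u : ZMod q ↦ 2 * (h * (a : ℤ)) * u = 0) =
      Finset.univ.filter (fun u : ZMod q ↦ (2 * a) • u = 0) := by
    refine Finset.filter_congr fun u _ ↦ ?_
    rw [show (2 * (h * (a : ℤ)) * u : ZMod q) = h * ((2 * a) • u) by simp; ring,
      ((ZMod.coe_int_isUnit_iff_isCoprime h q).2 hh.symm).mul_right_eq_zero]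
  have card_le := IsAddCyclic.card_nsmul_eq_zero_le (α := ZMod q) (n := 2 * a) (by omega)
  rw [torsion, ZMod.card]
  gcongr
  exact_mod_cast card_le

lemma norm_quadGaussSum_zmod_le_of_isCoprime {a h : ℤ} (ha : IsCoprime (2 * a) q)
    (hh : IsCoprime h q) (B : ZMod q) :
    ‖quadGaussSum ZMod.stdAddChar (h * a : ZMod q) B‖ ≤ √q := by
  have unit : IsUnit (2 * (h * a) : ZMod q) := by
    simpa [mul_left_comm] using (ZMod.coe_int_isUnit_iff_isCoprime _ q).2 (hh.mul_left ha).symm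
  simpa using norm_quadGaussSum_le_sqrt_of_isUnit (ZMod.isPrimitive_stdAddChar q) unit B

lemma quadGaussSum_zmod_eq_zero {a l h : ℤ} (hh : IsCoprime h q) {p : ℕ} (hp : p.Prime)
    (hpq : p ∣ q) (hpa : (p : ℤ) ∣ a) (hpl : ¬ (p : ℤ) ∣ l) :
    quadGaussSum ZMod.stdAddChar (h * a : ZMod q) (h * l) = 0 := by
  obtain ⟨d, rfl⟩ := hpq
  obtain ⟨a', rfl⟩ := hpa
  have hp' := Nat.prime_iff_prime_int.1 hp
  have hd : (d : ℤ) ≠ 0 := by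
    have := NeZero.ne (p * d)
    aesop
  refine quadGaussSum_eq_zero (d := (d : ZMod (p * d))) ?_ ?_
  · have : ((p * d : ℕ) : ZMod (p * d)) = 0 := CharP.cast_eq_zero _ _
    push_cast at this ⊢
    linear_combination h * a' * this
  · rw [← AddChar.map_zero_eq_one (ZMod.stdAddChar (N := p * d)),
      ZMod.injective_stdAddChar.ne_iff]
    intro vanish
    have dvd : ((p * d : ℕ) : ℤ) ∣ h * l * d := by
      rw [← ZMod.intCast_zmod_eq_zero_iff_dvd]
      exact_mod_cast vanish
    push_cast at dvd
    refine hpl ((hp'.dvd_or_dvd (Int.dvd_of_mul_dvd_mul_right hd dvd)).resolve_left fun hph ↦ ?_)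
    exact hp'.not_isUnit (hh.isUnit_of_dvd' hph (by simp))

end GaussSums

section GammaLaw

open MeasureTheory ProbabilityTheory
open Complex (I)

variable {a r s : ℝ}

lemma integral_gammaPDFReal (ha : 0 < a) (hr : 0 < r) : ∫ x, gammaPDFReal a r x = 1 := by
  rw [integral_eq_lintegral_of_nonneg_ae (.of_forall (gammaPDFReal_nonneg ha hr)) (by fun_prop),
    ENNReal.toReal_eq_one_iff]
  exact lintegral_gammaPDF_eq_one ha hr

lemma integrable_gammaPDFReal (ha : 0 < a) (hr : 0 < r) : Integrable (gammaPDFReal a r) :=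
  .of_integral_ne_zero (by simp [integral_gammaPDFReal ha hr])

lemma integral_gammaMeasure (ha : 0 < a) (hr : 0 < r) {E : Type*} [NormedAddCommGroup E]
    [NormedSpace ℝ E] (f : ℝ → E) :
    ∫ x, f x ∂gammaMeasure a r = ∫ x, gammaPDFReal a r x • f x := by
  have measurable : Measurable (gammaPDF a r) := (measurable_gammaPDFReal a r).ennreal_ofReal
  rw [gammaMeasure, integral_withDensity_eq_integral_toReal_smul measurable
    (.of_forall fun _ ↦ ENNReal.ofReal_lt_top)]
  simp only [gammaPDF, ENNReal.toReal_ofReal (gammaPDFReal_nonneg ha hr _)]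

lemma gammaPDFReal_mul_exp (hr : 0 ≤ r) {t : ℝ} (ht : t < r) (x : ℝ) :
    gammaPDFReal a r x * Real.exp (t * x) = (r / (r - t)) ^ a * gammaPDFReal a (r - t) x := by
  have hrt : 0 < r - t := sub_pos.2 ht
  rw [gammaPDFReal, gammaPDFReal, Real.div_rpow hr hrt.le]
  split_ifs
  · have exp_add : Real.exp (-((r - t) * x)) = Real.exp (-(r * x)) * Real.exp (t * x) := by
      rw [← Real.exp_add]
      ring_nf
    have : (r - t) ^ a ≠ 0 := (Real.rpow_pos_of_pos hrt a).ne'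
    rw [exp_add]
    field_simp
  · simp

lemma mgf_id_gammaMeasure (ha : 0 < a) (hr : 0 < r) {t : ℝ} (ht : t < r) :
    mgf id (gammaMeasure a r) t = (1 - t / r) ^ (-a) := by
  have hrt : 0 < r - t := sub_pos.2 ht
  calc mgf id (gammaMeasure a r) t
      = ∫ x, (r / (r - t)) ^ a * gammaPDFReal a (r - t) x := by
        simp only [mgf, integral_gammaMeasure ha hr, smul_eq_mul, id,
          gammaPDFReal_mul_exp hr.le ht]
    _ = (r / (r - t)) ^ a := by rw [integral_const_mul, integral_gammaPDFReal ha hrt, mul_one]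
    _ = (1 - t / r) ^ (-a) := by
        rw [one_sub_div hr.ne', Real.rpow_neg (by positivity),
          ← Real.inv_rpow (by positivity), inv_div]

lemma Iio_subset_interior_integrableExpSet_gammaMeasure (ha : 0 < a) (hr : 0 < r) :
    Set.Iio r ⊆ interior (integrableExpSet id (gammaMeasure a r)) := by
  refine interior_maximal (fun t ht ↦ ?_) isOpen_Iio
  have : 0 < 1 - t / r := sub_pos.2 ((div_lt_one hr).2 ht)
  by_contra undefined
  exact (Real.rpow_pos_of_pos this (-a)).ne'
    ((mgf_id_gammaMeasure ha hr ht).symm.trans (mgf_undef undefined))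

lemma complexMGF_id_gammaMeasure (ha : 0 < a) (hr : 0 < r) {z : ℂ} (hz : z.re < r) :
    complexMGF id (gammaMeasure a r) z = (1 - z / r) ^ (-a : ℂ) := by
  have re_pos {w : ℂ} (hw : w.re < r) : 0 < (1 - w / r).re := by
    simpa using (div_lt_one hr).2 hw
  have analytic_mgf : AnalyticOnNhd ℂ (complexMGF id (gammaMeasure a r)) {w | w.re < r} :=
    analyticOnNhd_complexMGF.mono fun w hw ↦
      Iio_subset_interior_integrableExpSet_gammaMeasure ha hr hw
  have analytic_cpow : AnalyticOnNhd ℂ (fun w : ℂ ↦ (1 - w / r) ^ (-a : ℂ)) {w | w.re < r} :=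
    fun w hw ↦ AnalyticAt.cpow (by fun_prop) (by fun_prop) (Or.inl (re_pos hw))
  have eq_ofReal (t : ℝ) (ht : t < r) :
      complexMGF id (gammaMeasure a r) t = (1 - (t : ℂ) / r) ^ (-a : ℂ) := by
    have : 0 ≤ 1 - t / r := by simpa using (re_pos (w := t) (by simpa using ht)).le
    rw [complexMGF_ofReal, mgf_id_gammaMeasure ha hr ht, Complex.ofReal_cpow this]
    simp
  have tendsto_ofReal : Filter.Tendsto ((↑) : ℝ → ℂ) (nhdsWithin 0 {0}ᶜ) (nhdsWithin 0 {0}ᶜ) := by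
    refine tendsto_nhdsWithin_iff.2 ⟨?_, ?_⟩
    · exact (Complex.continuous_ofReal.tendsto' 0 0 rfl).mono_left nhdsWithin_le_nhds
    · filter_upwards [self_mem_nhdsWithin] with t ht using by simpa using ht
  refine analytic_mgf.eqOn_of_preconnected_of_frequently_eq analytic_cpow
    (convex_halfSpace_re_lt r).isPreconnected (z₀ := 0) (by simpa using hr)
    (tendsto_ofReal.frequently ?_) hz
  exact ((eventually_lt_nhds hr).filter_mono nhdsWithin_le_nhds).mono eq_ofReal |>.frequently

lemma charFun_gammaMeasure (ha : 0 < a) (hr : 0 < r) (t : ℝ) :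
    charFun (gammaMeasure a r) t = (1 - t * I / r) ^ (-a : ℂ) := by
  rw [← complexMGF_id_mul_I, complexMGF_id_gammaMeasure ha hr (by simpa using hr)]

lemma norm_one_sub_mul_I_cpow (s x : ℝ) :
    ‖(1 - x * I) ^ (-s : ℂ)‖ = (1 + x ^ 2) ^ (-(s / 2)) := by
  rw [← Complex.ofReal_neg, Complex.norm_cpow_real, Complex.norm_def, Real.sqrt_eq_rpow,
    ← Real.rpow_mul (Complex.normSq_nonneg _)]
  congr 1
  · simp [Complex.normSq_apply, sq]
  · ring

lemma integrable_one_sub_mul_I_cpow (hs : 1 < s) :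
    Integrable fun x : ℝ ↦ (1 - x * I) ^ (-s : ℂ) := by
  refine (integrable_rpow_neg_one_add_norm_sq (E := ℝ) (μ := volume) (r := s)
    (by simpa using hs)).mono' (Measurable.aestronglyMeasurable (by fun_prop))
    (.of_forall fun x ↦ ?_)
  rw [norm_one_sub_mul_I_cpow, Real.norm_eq_abs, sq_abs, neg_div]

lemma fourier_gammaPDFReal (hs : 0 < s) (ξ : ℝ) :
    FourierTransform.fourier (fun x ↦ (gammaPDFReal s 1 x : ℂ)) ξ =
      (1 - (-(2 * Real.pi) * ξ : ℝ) * I) ^ (-s : ℂ) := by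
  have charFun_eq := charFun_gammaMeasure hs one_pos (-(2 * Real.pi) * ξ)
  rw [Complex.ofReal_one, div_one] at charFun_eq
  rw [← charFun_eq, charFun_apply_real, integral_gammaMeasure hs one_pos, Real.fourier_eq']
  refine integral_congr_ae (.of_forall fun x ↦ ?_)
  simp only [Complex.real_smul, smul_eq_mul, mul_comm (Complex.exp _)]
  congr 2
  push_cast
  simp only [neg_mul, RCLike.inner_apply, Real.ringHom_apply, Complex.ofReal_mul, neg_inj,
    mul_eq_mul_right_iff, Complex.I_ne_zero, or_false]
  ring

/-- The singular integral `∫ (1 - i x) ^ (-s) e(-x) dx`, the archimedean factor of the circle method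
for a diagonal form in `2 s` variables. -/
noncomputable def singularIntegral (s : ℝ) : ℂ :=
  ∫ x : ℝ, (1 - x * I) ^ (-s : ℂ) * Complex.exp (-(2 * Real.pi * I * x))

-- By Fourier inversion the integral is `2π` times the density of the gamma law at `2π`.
lemma singularIntegral_ne_zero (hs : 1 < s) : singularIntegral s ≠ 0 := by
  have s_pos : 0 < s := one_pos.trans hs
  have two_pi_ne : -(2 * Real.pi) ≠ 0 := neg_ne_zero.2 Real.two_pi_pos.ne'
  set f : ℝ → ℂ := fun x ↦ gammaPDFReal s 1 x
  have f_integrable : Integrable f := (integrable_gammaPDFReal s_pos one_pos).ofReal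
  have fourier_f : FourierTransform.fourier f = fun ξ : ℝ ↦
      (1 - (-(2 * Real.pi) * ξ : ℝ) * I) ^ (-s : ℂ) := funext (fourier_gammaPDFReal s_pos)
  have fourier_integrable : Integrable (FourierTransform.fourier f) := by
    rw [fourier_f]
    exact (integrable_one_sub_mul_I_cpow hs).comp_mul_left' two_pi_ne
  have f_continuousAt : ContinuousAt f (2 * Real.pi) := by
    refine Complex.continuous_ofReal.continuousAt.comp ?_
    have : gammaPDFReal s 1 =ᶠ[nhds (2 * Real.pi)] fun x ↦
        1 ^ s / Real.Gamma s * x ^ (s - 1) * Real.exp (-(1 * x)) := by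
      filter_upwards [lt_mem_nhds Real.two_pi_pos] with x hx using if_pos hx.le
    refine ContinuousAt.congr ?_ this.symm
    have := Real.continuousAt_rpow_const (2 * Real.pi) (s - 1) (Or.inl Real.two_pi_pos.ne')
    fun_prop
  have inversion := f_integrable.fourierInv_fourier_eq fourier_integrable f_continuousAt
  have substitution : FourierTransformInv.fourierInv (FourierTransform.fourier f) (2 * Real.pi) =
      |(-(2 * Real.pi))⁻¹| • singularIntegral s := by
    rw [singularIntegral, ← Measure.integral_comp_mul_left, fourier_f, Real.fourierInv_eq']
    refine integral_congr_ae (.of_forall fun ξ ↦ ?_)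
    simp only [smul_eq_mul, mul_comm (Complex.exp _)]
    congr 2
    push_cast
    simp only [RCLike.inner_apply, Real.ringHom_apply, Complex.ofReal_mul, Complex.ofReal_ofNat,
      neg_mul, mul_neg, neg_neg]
    ring
  intro vanish
  rw [substitution, vanish, smul_zero] at inversion
  exact (gammaPDFReal_pos s_pos one_pos Real.two_pi_pos).ne (Complex.ofReal_injective inversion)

end GammaLaw

section QuadraticTheta

open Filter
open Complex (I)

instance neZero_rat_den (ρ : ℚ) : NeZero ρ.den := ⟨ρ.den_nz⟩

/-- The theta series `∑ t, e((a t² + l t) w)` of an inhomogeneous quadratic polynomial, where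
`e(w) = exp(2πi w)`. -/
noncomputable def quadTheta (a l : ℤ) (w : ℂ) : ℂ :=
  ∑' t : ℤ, Complex.exp (2 * Real.pi * I * w * (a * t ^ 2 + l * t))

lemma jacobiTheta₂_term_quadTheta (a l t : ℤ) (w : ℂ) :
    jacobiTheta₂_term t (l * w) (2 * a * w) =
      Complex.exp (2 * Real.pi * I * w * (a * t ^ 2 + l * t)) := by
  rw [jacobiTheta₂_term]
  ring_nf

lemma quadTheta_eq_jacobiTheta₂ (a l : ℤ) (w : ℂ) :
    quadTheta a l w = jacobiTheta₂ (l * w) (2 * a * w) := by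
  simp_rw [quadTheta, jacobiTheta₂, jacobiTheta₂_term_quadTheta]

variable {a : ℤ} {w : ℂ}

lemma im_two_mul_mul_pos (ha : 0 < a) (hw : 0 < w.im) : 0 < (2 * a * w : ℂ).im := by
  have : (0 : ℝ) < a := by exact_mod_cast ha
  rw [show (2 * a * w : ℂ) = (2 * a : ℝ) * w by push_cast; rfl, Complex.im_ofReal_mul]
  positivity

lemma hasSum_quadTheta (ha : 0 < a) (l : ℤ) (hw : 0 < w.im) :
    HasSum (fun t : ℤ ↦ Complex.exp (2 * Real.pi * I * w * (a * t ^ 2 + l * t)))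
      (quadTheta a l w) := by
  simp_rw [quadTheta_eq_jacobiTheta₂, ← jacobiTheta₂_term_quadTheta]
  exact hasSum_jacobiTheta₂_term _ (im_two_mul_mul_pos ha hw)

lemma sum_fin_natCast_zmod {M : Type*} [AddCommMonoid M] (q : ℕ) [NeZero q] (f : ZMod q → M) :
    ∑ b : Fin q, f (b : ℕ) = ∑ b, f b := by
  cases q with
  | zero => exact (NeZero.ne 0 rfl).elim
  | succ k => exact Finset.sum_congr rfl fun b _ ↦ congrArg f (Fin.cast_val_eq_self b)

/-- The Gauss sum of `a b² + l b` at the rational point `ρ = h / q`, twisted by the frequency `m`: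
the sum of `e((h (a b² + l b) + m b) / q)` over residues `b` modulo `q`. -/
noncomputable def localGaussSum (ρ : ℚ) (a l m : ℤ) : ℂ :=
  quadGaussSum ZMod.stdAddChar (ρ.num * a : ZMod ρ.den) (ρ.num * l + m)

lemma norm_localGaussSum_le (ρ : ℚ) (ha : 0 < a) (l m : ℤ) :
    ‖localGaussSum ρ a l m‖ ≤ √(ρ.den * (2 * a)) :=
  norm_quadGaussSum_zmod_le ha ρ.isCoprime_num_den _

lemma stdAddChar_num_mul (ρ : ℚ) (k : ℤ) :
    ZMod.stdAddChar (ρ.num * k : ZMod ρ.den) = Complex.exp (2 * Real.pi * I * (ρ * k)) := by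
  rw [← Int.cast_mul, ZMod.stdAddChar_coe, Rat.cast_def]
  push_cast
  ring_nf

lemma exp_quadTheta_residue (ρ : ℚ) (a l c b : ℤ) (w : ℂ) :
    Complex.exp (2 * Real.pi * I * (ρ + w) *
        (a * (c * ρ.den + b : ℤ) ^ 2 + l * (c * ρ.den + b : ℤ))) =
      ZMod.stdAddChar (ρ.num * a * b ^ 2 + ρ.num * l * b : ZMod ρ.den) *
        Complex.exp (2 * Real.pi * I * w * (a * b ^ 2 + l * b)) *
        jacobiTheta₂_term c (w * ρ.den * (2 * a * b + l)) (2 * a * (ρ.den ^ 2 * w)) := by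
  have periodic : (ρ.num * a * b ^ 2 + ρ.num * l * b : ZMod ρ.den) =
      ρ.num * (a * (c * ρ.den + b) ^ 2 + l * (c * ρ.den + b) : ℤ) := by
    push_cast
    simp only [CharP.cast_eq_zero, mul_zero, zero_add]
    ring
  rw [periodic, stdAddChar_num_mul, jacobiTheta₂_term, ← Complex.exp_add, ← Complex.exp_add]
  push_cast
  ring_nf

lemma quadTheta_eq_sum_residues (ρ : ℚ) (ha : 0 < a) (l : ℤ) (hw : 0 < w.im) :
    quadTheta a l (ρ + w) = ∑ b : Fin ρ.den,
      ZMod.stdAddChar (ρ.num * a * (b : ℕ) ^ 2 + ρ.num * l * (b : ℕ) : ZMod ρ.den) *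
        Complex.exp (2 * Real.pi * I * w * (a * (b : ℕ) ^ 2 + l * (b : ℕ))) *
        jacobiTheta₂ (w * ρ.den * (2 * a * (b : ℕ) + l)) (2 * a * (ρ.den ^ 2 * w)) := by
  have ρw_im : 0 < (ρ + w : ℂ).im := by simpa using hw
  have sum := (Equiv.hasSum_iff ((Equiv.prodComm ..).trans (Int.divModEquiv ρ.den).symm)).2
    (hasSum_quadTheta ha l ρw_im)
  rw [← sum.tsum_eq, sum.summable.tsum_prod, tsum_fintype]
  refine Finset.sum_congr rfl fun b _ ↦ ?_
  rw [jacobiTheta₂, ← tsum_mul_left]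
  refine tsum_congr fun c ↦ ?_
  simpa using exp_quadTheta_residue ρ a l c (b : ℕ) w

lemma hasSum_jacobiTheta₂_residue {q : ℕ} [NeZero q] (ha : 0 < a) (l b : ℤ) (hw : 0 < w.im) :
    HasSum (fun m : ℤ ↦ Complex.exp (2 * Real.pi * I * (m * b / q)) *
        jacobiTheta₂_term m (l / (2 * a * q)) (-1 / (2 * a * (q ^ 2 * w))))
      ((-I * (2 * a * (q ^ 2 * w))) ^ (1 / 2 : ℂ) *
        Complex.exp (Real.pi * I * w * l ^ 2 / (2 * a)) *
        (Complex.exp (2 * Real.pi * I * w * (a * b ^ 2 + l * b)) *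
          jacobiTheta₂ (w * q * (2 * a * b + l)) (2 * a * (q ^ 2 * w)))) := by
  have q_ne : (q : ℂ) ≠ 0 := Nat.cast_ne_zero.2 (NeZero.ne q)
  have a_ne : (a : ℂ) ≠ 0 := Int.cast_ne_zero.2 ha.ne'
  have w_ne : w ≠ 0 := by rintro rfl; simp at hw
  have qw_im : 0 < (q ^ 2 * w : ℂ).im := by
    have : 0 < (q : ℝ) := Nat.cast_pos.2 (NeZero.pos q)
    rw [show (q ^ 2 * w : ℂ) = (q ^ 2 : ℝ) * w by push_cast; rfl, Complex.im_ofReal_mul]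
    positivity
  set τ : ℂ := 2 * a * (q ^ 2 * w) with hτ
  have τ_im : 0 < τ.im := im_two_mul_mul_pos ha qw_im
  have τ_ne : τ ≠ 0 := by rintro h; simp [h] at τ_im
  set z : ℂ := w * q * (2 * a * b + l) with hz
  have z_div : z / τ = b / q + l / (2 * a * q) := by
    rw [hz, hτ]
    field_simp
  have sqrt_ne : (-I * τ) ^ (1 / 2 : ℂ) ≠ 0 := by simp [Complex.cpow_eq_zero_iff, τ_ne]
  have inverse_im : 0 < (-1 / τ).im := by
    simpa [neg_div, Complex.inv_im] using div_pos τ_im (Complex.normSq_pos.2 τ_ne)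
  convert hasSum_jacobiTheta₂_term (z / τ) inverse_im using 1
  · ext m
    rw [z_div, jacobiTheta₂_term, jacobiTheta₂_term, ← Complex.exp_add]
    ring_nf
  · have exponents : Real.pi * I * w * l ^ 2 / (2 * a) + 2 * Real.pi * I * w * (a * b ^ 2 + l * b) +
        -Real.pi * I * z ^ 2 / τ = 0 := by
      rw [hz, hτ]
      field_simp
      ring
    rw [jacobiTheta₂_functional_equation z τ]
    calc _ = (-I * τ) ^ (1 / 2 : ℂ) * (1 / (-I * τ) ^ (1 / 2 : ℂ)) *
          (Complex.exp (Real.pi * I * w * l ^ 2 / (2 * a)) *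
            Complex.exp (2 * Real.pi * I * w * (a * b ^ 2 + l * b)) *
            Complex.exp (-Real.pi * I * z ^ 2 / τ)) * jacobiTheta₂ (z / τ) (-1 / τ) := by ring
      _ = _ := by
          rw [← Complex.exp_add, ← Complex.exp_add, exponents, Complex.exp_zero,
            mul_one_div_cancel sqrt_ne, one_mul, one_mul]

lemma hasSum_localGaussSum (ρ : ℚ) (ha : 0 < a) (l : ℤ) (hw : 0 < w.im) :
    HasSum (fun m : ℤ ↦ localGaussSum ρ a l m *
        jacobiTheta₂_term m (l / (2 * a * ρ.den)) (-1 / (2 * a * (ρ.den ^ 2 * w))))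
      ((-I * (2 * a * (ρ.den ^ 2 * w))) ^ (1 / 2 : ℂ) *
        Complex.exp (Real.pi * I * w * l ^ 2 / (2 * a)) * quadTheta a l (ρ + w)) := by
  rw [quadTheta_eq_sum_residues ρ ha l hw, Finset.mul_sum]
  simp_rw [localGaussSum, quadGaussSum, ← sum_fin_natCast_zmod, Finset.sum_mul]
  refine hasSum_sum fun b _ ↦ ?_
  have twist (m : ℤ) : ZMod.stdAddChar (m * (b : ℕ) : ZMod ρ.den) =
      Complex.exp (2 * Real.pi * I * (m * (b : ℕ) / ρ.den)) := by
    have := ZMod.stdAddChar_coe (N := ρ.den) (m * (b : ℕ))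
    push_cast at this ⊢
    rw [this]
    ring_nf
  convert (hasSum_jacobiTheta₂_residue (q := ρ.den) ha l (b : ℕ) hw).mul_left
    (ZMod.stdAddChar (ρ.num * a * (b : ℕ) ^ 2 + ρ.num * l * (b : ℕ) : ZMod ρ.den)) using 1
  · rfl
  · ext m
    rw [add_mul, ← add_assoc, AddChar.map_add_eq_mul, twist, mul_assoc, Int.cast_natCast]
  · simp only [Int.cast_natCast]
    ring

lemma summable_exp_neg_pi_mul_sq {c : ℝ} (hc : 0 < c) :
    Summable fun m : ℤ ↦ Real.exp (-(Real.pi * m ^ 2 * c)) := by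
  simpa [norm_jacobiTheta₂_term] using
    ((summable_jacobiTheta₂_term_iff 0 (c * I)).2 (by simpa using hc)).norm

lemma norm_jacobiTheta₂_term_dual (q : ℕ) (a l m : ℤ) (w : ℂ) :
    ‖jacobiTheta₂_term m (l / (2 * a * q)) (-1 / (2 * a * (q ^ 2 * w)))‖ =
      Real.exp (-(Real.pi * m ^ 2 * (w.im / ‖w‖ ^ 2 / (2 * a * q ^ 2)))) := by
  have frequency : (l / (2 * a * q) : ℂ) = ((l / (2 * a * q) : ℝ) : ℂ) := by push_cast; rfl
  have modulus : (-1 / (2 * a * (q ^ 2 * w)) : ℂ) = ((2 * a * q ^ 2)⁻¹ : ℝ) * -w⁻¹ := by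
    push_cast
    field_simp
  rw [norm_jacobiTheta₂_term, frequency, modulus, Complex.im_ofReal_mul, Complex.ofReal_im,
    Complex.neg_im, Complex.inv_im, Complex.normSq_eq_norm_sq]
  ring_nf

lemma norm_neg_I_mul_cpow_half (w : ℂ) : ‖(-I * w) ^ (1 / 2 : ℂ)‖ = √‖w‖ := by
  rw [show (1 / 2 : ℂ) = (1 / 2 : ℝ) by push_cast; rfl, Complex.norm_cpow_real, Real.sqrt_eq_rpow]
  simp

lemma exp_neg_le_norm_exp {a : ℝ} (ha : 0 < a) (l : ℝ) (hw1 : w.im ≤ 1) :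
    Real.exp (-(Real.pi * l ^ 2 / (2 * a))) ≤
      ‖Complex.exp (Real.pi * I * w * l ^ 2 / (2 * a))‖ := by
  have : (Real.pi * I * w * l ^ 2 / (2 * a) : ℂ) = (Real.pi * l ^ 2 / (2 * a) : ℝ) * (I * w) := by
    push_cast
    ring
  rw [Complex.norm_exp, this, Complex.re_ofReal_mul, Complex.I_mul_re, Real.exp_le_exp, mul_neg]
  exact neg_le_neg (mul_le_of_le_one_right (by positivity) hw1)

lemma norm_dual_term_le (ρ : ℚ) (ha : 0 < a) (l m : ℤ) (w : ℂ) :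
    ‖localGaussSum ρ a l m *
        jacobiTheta₂_term m (l / (2 * a * ρ.den)) (-1 / (2 * a * (ρ.den ^ 2 * w)))‖ ≤
      √(ρ.den * (2 * a)) *
        Real.exp (-(Real.pi * m ^ 2 * (w.im / ‖w‖ ^ 2 / (2 * a * ρ.den ^ 2)))) := by
  rw [norm_mul, norm_jacobiTheta₂_term_dual]
  gcongr
  exact norm_localGaussSum_le ρ ha l m

lemma sqrt_norm_mul_norm_quadTheta_le_tsum (ρ : ℚ) (ha : 0 < a) (l : ℤ) (hw : 0 < w.im)
    (hw1 : w.im ≤ 1) :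
    √‖w‖ * ‖quadTheta a l (ρ + w)‖ * √ρ.den * Real.exp (-(Real.pi * l ^ 2 / (2 * a))) ≤
      ∑' m : ℤ, Real.exp (-(Real.pi * m ^ 2 * (w.im / ‖w‖ ^ 2 / (2 * a * ρ.den ^ 2)))) := by
  have a_pos : (0 : ℝ) < a := by exact_mod_cast ha
  have q_pos : (0 : ℝ) < ρ.den := Nat.cast_pos.2 ρ.den_pos
  have w_pos : 0 < ‖w‖ := norm_pos_iff.2 fun h ↦ by simp [h] at hw
  have total_le := tsum_of_norm_bounded
    ((summable_exp_neg_pi_mul_sq (by positivity)).hasSum.mul_left _) (norm_dual_term_le ρ ha l · w)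
  rw [(hasSum_localGaussSum ρ ha l hw).tsum_eq, norm_mul, norm_mul, norm_neg_I_mul_cpow_half]
    at total_le
  have modulus : √‖(2 * a * (ρ.den ^ 2 * w) : ℂ)‖ = √(2 * a) * ρ.den * √‖w‖ := by
    rw [show (2 * a * (ρ.den ^ 2 * w) : ℂ) = (2 * a * ρ.den ^ 2 : ℝ) * w by push_cast; ring,
      norm_mul, Complex.norm_of_nonneg (by positivity), Real.sqrt_mul (by positivity),
      Real.sqrt_mul (by positivity), Real.sqrt_sq q_pos.le]
  refine le_of_mul_le_mul_left ?_ (by positivity : 0 < √ρ.den * √(2 * a))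
  calc _ = √(2 * a) * ρ.den * √‖w‖ * Real.exp (-(Real.pi * l ^ 2 / (2 * a))) *
        ‖quadTheta a l (ρ + w)‖ := by
        nth_rewrite 3 [← Real.mul_self_sqrt q_pos.le]
        ring
    _ ≤ √(2 * a) * ρ.den * √‖w‖ * ‖Complex.exp (Real.pi * I * w * l ^ 2 / (2 * a))‖ *
        ‖quadTheta a l (ρ + w)‖ := by
        gcongr
        exact exp_neg_le_norm_exp a_pos l hw1
    _ ≤ _ := by rwa [← modulus, ← Real.sqrt_mul q_pos.le]

-- On this region the decay of the dual series is uniform in the denominator of `ρ`.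
lemma exists_forall_norm_quadTheta_le (ha : 0 < a) (l : ℤ) :
    ∃ C > 0, ∀ (ρ : ℚ) (w : ℂ), 0 < w.im → w.im ≤ 1 → ρ.den ^ 2 * ‖w‖ ^ 2 ≤ 2 * w.im →
      √‖w‖ * ‖quadTheta a l (ρ + w)‖ ≤ C / √ρ.den := by
  have a_pos : (0 : ℝ) < a := by exact_mod_cast ha
  have decay {c : ℝ} (hc : 1 / (4 * a) ≤ c) :=
    summable_exp_neg_pi_mul_sq (hc.trans_lt' (by positivity))
  set S : ℝ := ∑' m : ℤ, Real.exp (-(Real.pi * m ^ 2 * (1 / (4 * a))))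
  have S_pos : 0 < S := (decay le_rfl).tsum_pos (fun _ ↦ (Real.exp_pos _).le) 0 (Real.exp_pos _)
  refine ⟨S * Real.exp (Real.pi * l ^ 2 / (2 * a)), by positivity, fun ρ w hw hw1 region ↦ ?_⟩
  have : (0 : ℝ) < ρ.den := Nat.cast_pos.2 ρ.den_pos
  have w_pos : 0 < ‖w‖ := norm_pos_iff.2 fun h ↦ by simp [h] at hw
  have width : 1 / (4 * a) ≤ w.im / ‖w‖ ^ 2 / (2 * a * ρ.den ^ 2) := by
    rw [div_div, div_le_div_iff₀ (by positivity) (by positivity)]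
    nlinarith
  rw [le_div_iff₀ (by positivity), ← div_le_iff₀ (Real.exp_pos _), div_eq_mul_inv, ← Real.exp_neg]
  refine (sqrt_norm_mul_norm_quadTheta_le_tsum ρ ha l hw hw1).trans
    ((decay width).tsum_le_tsum (fun m ↦ ?_) (decay le_rfl))
  gcongr

section Cusp

variable {ι : Type*} {F : Filter ι} {u : ι → ℂ}

lemma tendsto_tsum_dual_terms (ρ : ℚ) (ha : 0 < a) (l : ℤ)
    (hcusp : Tendsto (fun i ↦ (u i).im / ‖u i‖ ^ 2) F atTop) :
    Tendsto (fun i ↦ ∑' m : ℤ, localGaussSum ρ a l m *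
        jacobiTheta₂_term m (l / (2 * a * ρ.den)) (-1 / (2 * a * (ρ.den ^ 2 * u i))))
      F (nhds (localGaussSum ρ a l 0)) := by
  have a_pos : (0 : ℝ) < a := by exact_mod_cast ha
  have q_pos : (0 : ℝ) < ρ.den := Nat.cast_pos.2 ρ.den_pos
  have width : Tendsto (fun i ↦ (u i).im / ‖u i‖ ^ 2 / (2 * a * ρ.den ^ 2)) F atTop :=
    hcusp.atTop_div_const (mul_pos (mul_pos two_pos a_pos) (sq_pos_of_pos q_pos))
  rw [← tsum_ite_eq (0 : ℤ) fun m ↦ localGaussSum ρ a l m]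
  refine tendsto_tsum_of_dominated_convergence
    ((summable_exp_neg_pi_mul_sq one_pos).mul_left √(ρ.den * (2 * a))) (fun m ↦ ?_) ?_
  · split_ifs with hm
    · simp only [hm, jacobiTheta₂_term, Int.cast_zero]
      simpa using tendsto_const_nhds
    · refine squeeze_zero_norm (fun i ↦ norm_dual_term_le ρ ha l m (u i)) ?_
      have : 0 < Real.pi * (m : ℝ) ^ 2 :=
        mul_pos Real.pi_pos (sq_pos_of_ne_zero (Int.cast_ne_zero.2 hm))
      simpa using (Real.tendsto_exp_neg_atTop_nhds_zero.comp
        (width.const_mul_atTop this)).const_mul √(ρ.den * (2 * a))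
  · filter_upwards [width.eventually_ge_atTop 1] with i hi m
    refine (norm_dual_term_le ρ ha l m (u i)).trans ?_
    gcongr

lemma ofReal_mul_cpow {t : ℝ} (ht : 0 < t) {z : ℂ} (hz : z ≠ 0) (s : ℂ) :
    (t * z) ^ s = (t : ℂ) ^ s * z ^ s := by
  have t_ne : (t : ℂ) ≠ 0 := Complex.ofReal_ne_zero.2 ht.ne'
  rw [Complex.cpow_def_of_ne_zero (mul_ne_zero t_ne hz), Complex.cpow_def_of_ne_zero t_ne,
    Complex.cpow_def_of_ne_zero hz, Complex.log_ofReal_mul ht hz, Complex.ofReal_log ht.le,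
    add_mul, Complex.exp_add]

-- As `u → 0` inside horoballs at the cusp `ρ`, only the zero frequency survives.
lemma tendsto_quadTheta (ρ : ℚ) (ha : 0 < a) (l : ℤ) (hu : ∀ᶠ i in F, 0 < (u i).im)
    (hu0 : Tendsto u F (nhds 0)) (hcusp : Tendsto (fun i ↦ (u i).im / ‖u i‖ ^ 2) F atTop) :
    Tendsto (fun i ↦ (-I * u i) ^ (1 / 2 : ℂ) * quadTheta a l (ρ + u i)) F
      (nhds (localGaussSum ρ a l 0 / (√(2 * a) * ρ.den : ℝ))) := by
  have : (0 : ℝ) < a := by exact_mod_cast ha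
  have q_pos : (0 : ℝ) < ρ.den := Nat.cast_pos.2 ρ.den_pos
  have sqrt_ne : ((√(2 * a) * ρ.den : ℝ) : ℂ) ≠ 0 := Complex.ofReal_ne_zero.2 (by positivity)
  have exp_tendsto : Tendsto (fun i ↦ Complex.exp (Real.pi * I * u i * l ^ 2 / (2 * a))) F
      (nhds 1) := by
    have : Continuous fun z : ℂ ↦ Complex.exp (Real.pi * I * z * l ^ 2 / (2 * a)) := by fun_prop
    simpa [Function.comp_def] using (this.tendsto 0).comp hu0
  have limit := ((tendsto_tsum_dual_terms ρ ha l hcusp).div exp_tendsto one_ne_zero).div_const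
    ((√(2 * a) * ρ.den : ℝ) : ℂ)
  rw [div_one] at limit
  refine limit.congr' ?_
  filter_upwards [hu] with i hi
  have u_ne : -I * u i ≠ 0 :=
    mul_ne_zero (neg_ne_zero.2 Complex.I_ne_zero) fun h ↦ by simp [h] at hi
  have root : (-I * (2 * a * (ρ.den ^ 2 * u i))) ^ (1 / 2 : ℂ) =
      (√(2 * a) * ρ.den : ℝ) * (-I * u i) ^ (1 / 2 : ℂ) := by
    rw [show (-I * (2 * a * (ρ.den ^ 2 * u i)) : ℂ) = (2 * a * ρ.den ^ 2 : ℝ) * (-I * u i) by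
      push_cast; ring, ofReal_mul_cpow (by positivity) u_ne,
      show (1 / 2 : ℂ) = (1 / 2 : ℝ) by push_cast; rfl, ← Complex.ofReal_cpow (by positivity),
      ← Real.sqrt_eq_rpow, Real.sqrt_mul (by positivity), Real.sqrt_sq q_pos.le]
  simp only [Pi.div_apply, (hasSum_localGaussSum ρ ha l hi).tsum_eq, root]
  field_simp

end Cusp

end QuadraticTheta

section FordArcs

open Filter Encodable

/-- The real numbers `α` for which `α + i / N` lies in the horoball `{z | ρ.den² |z - ρ|² ≤ 2 im z}`
at the rational `ρ`, a Ford disc of doubled radius. -/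
def fordArc (N : ℕ) (ρ : ℚ) : Set ℝ :=
  {α | (ρ.den : ℝ) ^ 2 * ((α - ρ) ^ 2 + (1 / N) ^ 2) ≤ 2 / N}

/-- The part of `fordArc N ρ` not covered by the arcs at rationals that precede `ρ` in a fixed
enumeration of `ℚ`; these parts dissect the line. -/
def ownArc (N : ℕ) (ρ : ℚ) : Set ℝ :=
  fordArc N ρ \ ⋃ σ ∈ {σ : ℚ | encode σ < encode ρ}, fordArc N σ

lemma mem_fordArc {N : ℕ} {ρ : ℚ} {α : ℝ} :
    α ∈ fordArc N ρ ↔ (ρ.den : ℝ) ^ 2 * ((α - ρ) ^ 2 + (1 / N) ^ 2) ≤ 2 / N :=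
  Iff.rfl

lemma measurableSet_fordArc (N : ℕ) (ρ : ℚ) : MeasurableSet (fordArc N ρ) :=
  measurableSet_le (by fun_prop) measurable_const

lemma measurableSet_ownArc (N : ℕ) (ρ : ℚ) : MeasurableSet (ownArc N ρ) :=
  (measurableSet_fordArc N ρ).diff
    (.biUnion (Set.to_countable _) fun σ _ ↦ measurableSet_fordArc N σ)

lemma exists_mem_fordArc {N : ℕ} (hN : 0 < N) (α : ℝ) : ∃ ρ, α ∈ fordArc N ρ := by
  obtain ⟨ρ, close, den_le⟩ := Real.exists_rat_abs_sub_le_and_den_le α (Nat.sqrt_pos.2 hN)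
  have N_pos : (0 : ℝ) < N := Nat.cast_pos.2 hN
  have den_pos : (0 : ℝ) < ρ.den := Nat.cast_pos.2 ρ.den_pos
  have den_sq_le : (ρ.den : ℝ) ^ 2 ≤ N := by
    exact_mod_cast (Nat.pow_le_pow_left den_le 2).trans (Nat.sqrt_le' N)
  have lt_sqrt : (N : ℝ) ≤ (N.sqrt + 1) ^ 2 := by exact_mod_cast (Nat.lt_succ_sqrt' N).le
  have close_sq : (ρ.den * (α - ρ)) ^ 2 ≤ 1 / N := by
    rw [le_div_iff₀ (by positivity), mul_comm] at close
    calc (ρ.den * (α - ρ)) ^ 2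
        = ((N.sqrt + 1) * ρ.den * |α - ρ|) ^ 2 / (N.sqrt + 1 : ℝ) ^ 2 := by
          rw [mul_assoc, mul_pow (N.sqrt + 1 : ℝ), mul_div_cancel_left₀ _ (by positivity),
            mul_pow, mul_pow, sq_abs]
      _ ≤ 1 ^ 2 / (N : ℝ) := by gcongr
      _ = 1 / N := by rw [one_pow]
  refine ⟨ρ, mem_fordArc.2 ?_⟩
  calc (ρ.den : ℝ) ^ 2 * ((α - ρ) ^ 2 + (1 / N) ^ 2)
      = (ρ.den * (α - ρ)) ^ 2 + ρ.den ^ 2 * (1 / (N : ℝ)) ^ 2 := by ring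
    _ ≤ 1 / (N : ℝ) + N * (1 / (N : ℝ)) ^ 2 := by gcongr
    _ = 2 / N := by field_simp; norm_num

lemma iUnion_ownArc {N : ℕ} (hN : 0 < N) : ⋃ ρ, ownArc N ρ = Set.univ := by
  refine Set.eq_univ_of_forall fun α ↦ Set.mem_iUnion.2 ?_
  obtain ⟨ρ, hρ, least⟩ := (InvImage.wf encode wellFounded_lt).has_min _ (exists_mem_fordArc hN α)
  refine ⟨ρ, hρ, fun h ↦ ?_⟩
  obtain ⟨σ, hσ, mem⟩ := Set.mem_iUnion₂.1 h
  exact least σ mem hσ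

lemma pairwise_disjoint_ownArc (N : ℕ) : Pairwise (Function.onFun Disjoint (ownArc N)) := by
  intro ρ σ hne
  refine Set.disjoint_left.2 fun α hρ hσ ↦ ?_
  rcases lt_or_gt_of_ne (encode_injective.ne hne) with h | h
  · exact hσ.2 (Set.mem_biUnion h hρ.1)
  · exact hρ.2 (Set.mem_biUnion h hσ.1)

lemma add_div_mem_fordArc_iff {N : ℕ} (hN : 0 < N) (ρ : ℚ) (x : ℝ) :
    ρ + x / N ∈ fordArc N ρ ↔ (ρ.den : ℝ) ^ 2 * (x ^ 2 + 1) ≤ 2 * N := by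
  have N_pos : (0 : ℝ) < N := Nat.cast_pos.2 hN
  rw [mem_fordArc, le_div_iff₀ N_pos, ← mul_le_mul_iff_of_pos_right N_pos]
  field_simp
  ring_nf

lemma sub_sq_le_of_mem_fordArc {N : ℕ} {ρ : ℚ} {α : ℝ} (h : α ∈ fordArc N ρ) :
    (α - ρ) ^ 2 ≤ 2 / N := by
  have den_ge : (1 : ℝ) ≤ ρ.den := by exact_mod_cast ρ.den_pos
  calc (α - ρ) ^ 2 ≤ 1 ^ 2 * ((α - ρ) ^ 2 + (1 / (N : ℝ)) ^ 2) := by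
        rw [one_pow, one_mul]
        exact le_add_of_nonneg_right (sq_nonneg _)
    _ ≤ ρ.den ^ 2 * ((α - ρ) ^ 2 + (1 / (N : ℝ)) ^ 2) := by gcongr
    _ ≤ 2 / N := mem_fordArc.1 h

lemma tendsto_add_div_natCast (y x : ℝ) :
    Tendsto (fun N : ℕ ↦ y + x / N) atTop (nhds y) := by
  simpa using tendsto_const_nhds.add (tendsto_const_div_atTop_nhds_zero_nat x)

lemma eventually_mem_ownArc (ρ : ℚ) (x : ℝ) : ∀ᶠ N : ℕ in atTop, ρ + x / N ∈ ownArc N ρ := by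
  have mem : ∀ᶠ N : ℕ in atTop, ρ + x / N ∈ fordArc N ρ := by
    filter_upwards [eventually_gt_atTop 0,
      (tendsto_natCast_atTop_atTop.const_mul_atTop two_pos).eventually_ge_atTop
        ((ρ.den : ℝ) ^ 2 * (x ^ 2 + 1))] with N hN large
    exact (add_div_mem_fordArc_iff hN ρ x).2 large
  have not_mem (σ : ℚ) (hσ : σ ≠ ρ) : ∀ᶠ N : ℕ in atTop, ρ + x / N ∉ fordArc N σ := by
    have distance : Tendsto (fun N : ℕ ↦ (ρ + x / N - σ : ℝ) ^ 2) atTop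
        (nhds ((ρ - σ : ℝ) ^ 2)) := ((tendsto_add_div_natCast ρ x).sub_const _).pow 2
    have pos : (0 : ℝ) < (ρ - σ : ℝ) ^ 2 := by
      have : (ρ - σ : ℝ) ≠ 0 := sub_ne_zero.2 (by exact_mod_cast hσ.symm)
      positivity
    filter_upwards [(tendsto_const_div_atTop_nhds_zero_nat 2).eventually_lt distance pos]
      with N hN h
    exact hN.not_ge (sub_sq_le_of_mem_fordArc h)
  have finite : {σ : ℚ | encode σ < encode ρ}.Finite :=
    (Set.finite_Iio (encode ρ)).preimage encode_injective.injOn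
  filter_upwards [mem, finite.eventually_all.2 fun σ hσ ↦
    not_mem σ fun h ↦ (h ▸ hσ : encode ρ < encode ρ).false] with N hN others
  exact ⟨hN, fun h ↦ by
    obtain ⟨σ, hσ, hmem⟩ := Set.mem_iUnion₂.1 h
    exact others σ hσ hmem⟩

lemma summable_indicator_den_rpow {s : ℝ} (hs : 2 < s) :
    Summable ({ρ : ℚ | |ρ| ≤ 2}.indicator fun ρ ↦ (ρ.den : ℝ) ^ (-s)) := by
  have injective : Function.Injective fun ρ : ℚ ↦ ![ρ.num, (ρ.den : ℤ)] := fun ρ σ h ↦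
    Rat.ext (by simpa using congrFun h 0) (by simpa using congrFun h 1)
  refine .of_nonneg_of_le (fun ρ ↦ Set.indicator_nonneg (fun _ _ ↦ by positivity) ρ) (fun ρ ↦ ?_)
    (((EisensteinSeries.summable_one_div_norm_rpow hs).comp_injective injective).mul_left (2 ^ s))
  refine Set.indicator_apply_le' (fun hρ ↦ ?_) fun _ ↦ ?_
  · have den_pos : (0 : ℝ) < ρ.den := Nat.cast_pos.2 ρ.den_pos
    have num_le : |(ρ.num : ℝ)| ≤ 2 * ρ.den := by
      have : |(ρ : ℝ)| ≤ 2 := by exact_mod_cast hρ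
      rwa [Rat.cast_def, abs_div, abs_of_pos den_pos, div_le_iff₀ den_pos] at this
    have norm_le : ‖![ρ.num, (ρ.den : ℤ)]‖ ≤ 2 * ρ.den := by
      refine (pi_norm_le_iff_of_nonneg (by positivity)).2 (Fin.forall_fin_two.2 ⟨?_, ?_⟩)
      · simpa [Int.norm_eq_abs] using num_le
      · simpa using le_mul_of_one_le_left den_pos.le one_le_two
    have norm_pos : 0 < ‖![ρ.num, (ρ.den : ℤ)]‖ :=
      norm_pos_iff.2 fun h ↦ ρ.den_nz (by simpa using congrFun h 1)
    calc (ρ.den : ℝ) ^ (-s) = 2 ^ s * (2 * ρ.den) ^ (-s) := by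
          rw [Real.mul_rpow two_pos.le den_pos.le, ← mul_assoc, ← Real.rpow_add two_pos,
            add_neg_cancel, Real.rpow_zero, one_mul]
      _ ≤ 2 ^ s * ‖![ρ.num, (ρ.den : ℤ)]‖ ^ (-s) := by
          gcongr 2 ^ s * ?_
          exact Real.rpow_le_rpow_of_nonpos norm_pos norm_le (by linarith)
  · simp only [Function.comp_apply]
    positivity

end FordArcs

section CircleMethod

open Filter MeasureTheory
open Complex (I)

variable {ι : Type*} [Fintype ι] {a l : ι → ℤ}

/-- The integrand `e(-N α) ∏ θᵢ(α + i / N)` of the circle method, whose integral over a period is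
a weighted count of the solutions of `∑ (aᵢ tᵢ² + lᵢ tᵢ) = N`. -/
noncomputable def circleIntegrand (a l : ι → ℤ) (N : ℕ) (α : ℝ) : ℂ :=
  (∏ i, quadTheta (a i) (l i) (α + I / N)) * Complex.exp (-(2 * Real.pi * I * N * α))

lemma im_ofReal_add_I_div (N : ℕ) (α : ℝ) : (α + I / N : ℂ).im = 1 / N := by
  rw [show (α + I / N : ℂ) = α + ((1 / N : ℝ) : ℂ) * I by push_cast; ring]
  simp

lemma continuous_quadTheta_add_I_div {a : ℤ} (ha : 0 < a) (l : ℤ) {N : ℕ} (hN : 0 < N) :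
    Continuous fun α : ℝ ↦ quadTheta a l (α + I / N) := by
  have : (0 : ℝ) < N := Nat.cast_pos.2 hN
  simp_rw [quadTheta_eq_jacobiTheta₂]
  refine continuous_iff_continuousAt.2 fun α ↦ ?_
  have im_pos : 0 < (2 * a * (α + I / N) : ℂ).im :=
    im_two_mul_mul_pos ha (by rw [im_ofReal_add_I_div]; positivity)
  exact ContinuousAt.comp (f := fun α : ℝ ↦ (l * (α + I / N), 2 * a * (α + I / N)))
    (g := fun p : ℂ × ℂ ↦ jacobiTheta₂ p.1 p.2) (continuousAt_jacobiTheta₂ _ im_pos) (by fun_prop)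

lemma continuous_circleIntegrand (ha : ∀ i, 0 < a i) (l : ι → ℤ) {N : ℕ} (hN : 0 < N) :
    Continuous (circleIntegrand a l N) :=
  (continuous_finsetProd _ fun i _ ↦ continuous_quadTheta_add_I_div (ha i) (l i) hN).mul
    (by fun_prop)

lemma integral_exp_int_mul_eq_zero (θ : ℝ) {n : ℤ} (hn : n ≠ 0) :
    ∫ α in Set.Ioc θ (θ + 1), Complex.exp (2 * Real.pi * I * n * α) = 0 := by
  have coeff_ne : (2 * Real.pi * I * n : ℂ) ≠ 0 := mul_ne_zero Complex.two_pi_I_ne_zero (by simpa)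
  have periodic : Complex.exp (2 * Real.pi * I * n * (θ + 1 : ℝ)) =
      Complex.exp (2 * Real.pi * I * n * θ) :=
    Complex.exp_eq_exp_iff_exists_int.2 ⟨n, by push_cast; ring⟩
  rw [← intervalIntegral.integral_of_le (by linarith), integral_exp_mul_complex coeff_ne, periodic,
    sub_self, zero_div]

/-- The theta factors of `circleIntegrand` cut down to a finite set of summation indices. -/
noncomputable def truncatedIntegrand (a l : ι → ℤ) (N : ℕ) (K : Finset ℤ) (α : ℝ) : ℂ :=
  (∏ i, ∑ t ∈ K, Complex.exp (2 * Real.pi * I * (α + I / N) * (a i * t ^ 2 + l i * t))) *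
    Complex.exp (-(2 * Real.pi * I * N * α))

lemma truncatedIntegrand_eq_sum [DecidableEq ι] (a l : ι → ℤ) (N : ℕ) (K : Finset ℤ) (α : ℝ) :
    truncatedIntegrand a l N K α = ∑ t ∈ Fintype.piFinset fun _ : ι ↦ K,
      Complex.exp (-(2 * Real.pi * (∑ i, (a i * t i ^ 2 + l i * t i) : ℤ) / N)) *
        Complex.exp (2 * Real.pi * I * (∑ i, (a i * t i ^ 2 + l i * t i) - N : ℤ) * α) := by
  rw [truncatedIntegrand, Finset.prod_univ_sum, Finset.sum_mul]
  refine Finset.sum_congr rfl fun t _ ↦ ?_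
  rw [← Complex.exp_sum, ← Complex.exp_add, ← Complex.exp_add, ← Finset.mul_sum]
  congr 1
  push_cast
  linear_combination (2 * Real.pi * (∑ i, (a i * t i ^ 2 + l i * t i)) / N) * Complex.I_sq

lemma integral_truncatedIntegrand_eq_zero {N : ℕ}
    (hrep : ∀ t : ι → ℤ, ∑ i, (a i * t i ^ 2 + l i * t i) ≠ N) (θ : ℝ) (K : Finset ℤ) :
    ∫ α in Set.Ioc θ (θ + 1), truncatedIntegrand a l N K α = 0 := by
  classical
  simp_rw [truncatedIntegrand_eq_sum]
  rw [integral_finsetSum _ fun t _ ↦ Continuous.integrableOn_Ioc (by fun_prop)]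
  refine Finset.sum_eq_zero fun t _ ↦ ?_
  rw [integral_const_mul, integral_exp_int_mul_eq_zero θ (sub_ne_zero.2 (hrep t)), mul_zero]

lemma norm_quadTheta_term (a l t : ℤ) (N : ℕ) (α : ℝ) :
    ‖Complex.exp (2 * Real.pi * I * (α + I / N) * (a * t ^ 2 + l * t))‖ =
      Real.exp (-(2 * Real.pi * (a * t ^ 2 + l * t) / N)) := by
  have : (2 * Real.pi * I * (α + I / N) * (a * t ^ 2 + l * t) : ℂ) =
      (2 * Real.pi * (a * t ^ 2 + l * t) : ℝ) * (I * (α + I / N)) := by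
    push_cast
    ring
  rw [Complex.norm_exp, this, Complex.re_ofReal_mul, Complex.I_mul_re, im_ofReal_add_I_div]
  ring_nf

lemma tendsto_truncatedIntegrand (ha : ∀ i, 0 < a i) (l : ι → ℤ) {N : ℕ} (hN : 0 < N) (α : ℝ) :
    Tendsto (truncatedIntegrand a l N · α) atTop (nhds (circleIntegrand a l N α)) :=
  (tendsto_finsetProd _ fun i _ ↦ hasSum_quadTheta (ha i) (l i)
    (by rw [im_ofReal_add_I_div]; positivity)).mul_const _

lemma norm_truncatedIntegrand_le (ha : ∀ i, 0 < a i) (l : ι → ℤ) {N : ℕ} (hN : 0 < N)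
    (K : Finset ℤ) (α : ℝ) : ‖truncatedIntegrand a l N K α‖ ≤
      ∏ i, ∑' t : ℤ, Real.exp (-(2 * Real.pi * (a i * t ^ 2 + l i * t) / N)) := by
  have unimodular : ‖Complex.exp (-(2 * Real.pi * I * N * α))‖ = 1 := by simp [Complex.norm_exp]
  rw [truncatedIntegrand, norm_mul, unimodular, mul_one, norm_prod]
  refine Finset.prod_le_prod (fun _ _ ↦ norm_nonneg _) fun i _ ↦ (norm_sum_le _ _).trans ?_
  have summable := (hasSum_quadTheta (ha i) (l i) (w := α + I / N)
    (by rw [im_ofReal_add_I_div]; positivity)).summable.norm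
  simp only [norm_quadTheta_term] at summable ⊢
  exact summable.sum_le_tsum K fun _ _ ↦ (Real.exp_pos _).le

lemma integral_circleIntegrand_eq_zero (ha : ∀ i, 0 < a i) {N : ℕ} (hN : 0 < N)
    (hrep : ∀ t : ι → ℤ, ∑ i, (a i * t i ^ 2 + l i * t i) ≠ N) (θ : ℝ) :
    ∫ α in Set.Ioc θ (θ + 1), circleIntegrand a l N α = 0 := by
  refine tendsto_nhds_unique (tendsto_integral_filter_of_dominated_convergence _
    (.of_forall fun K ↦ ?_) (.of_forall fun K ↦ .of_forall fun α ↦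
      norm_truncatedIntegrand_le ha l hN K α) (integrable_const _)
    (.of_forall fun α ↦ tendsto_truncatedIntegrand ha l hN α)) ?_
  · refine Continuous.aestronglyMeasurable ?_
    unfold truncatedIntegrand
    fun_prop
  · simpa only [integral_truncatedIntegrand_eq_zero hrep] using tendsto_const_nhds

end CircleMethod

section SingularSeries

open Filter MeasureTheory
open Complex (I)

variable {ι : Type*} [Fintype ι] {a l : ι → ℤ} {θ : ℝ}

/-- The theta factors of `circleIntegrand` near the rational `ρ`, in the coordinate `x` with
`α = ρ + x / N` and normalised so as to have a limit as `N → ∞`. -/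
noncomputable def rescaledIntegrand (a l : ι → ℤ) (N : ℕ) (ρ : ℚ) (x : ℝ) : ℂ :=
  (N : ℂ) ^ (-(Fintype.card ι / 2 : ℝ) : ℂ) *
    (∏ i, quadTheta (a i) (l i) (ρ + (x + I) / N)) * Complex.exp (-(2 * Real.pi * I * x))

lemma im_ofReal_add_I_div_natCast (N : ℕ) (x : ℝ) : ((x + I) / N : ℂ).im = 1 / N := by
  rw [Complex.div_natCast_im]
  simp

lemma sq_norm_ofReal_add_I_div_natCast (N : ℕ) (x : ℝ) :
    ‖((x + I) / N : ℂ)‖ ^ 2 = (1 + x ^ 2) / N ^ 2 := by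
  rw [norm_div, div_pow, Complex.sq_norm, Complex.norm_natCast, Complex.normSq_apply]
  simp only [Complex.add_re, Complex.ofReal_re, Complex.I_re, add_zero, Complex.add_im,
    Complex.ofReal_im, Complex.I_im, zero_add, mul_one]
  ring

lemma natCast_cpow_neg_card_div_two (ι : Type*) [Fintype ι] {N : ℕ} (hN : 0 < N) (x : ℝ) :
    (N : ℂ) ^ (-(Fintype.card ι / 2 : ℝ) : ℂ) = (1 - x * I) ^ (-(Fintype.card ι / 2 : ℝ) : ℂ) *
      ∏ _i : ι, (-I * ((x + I) / N)) ^ (1 / 2 : ℂ) := by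
  have ne_zero : (1 - x * I : ℂ) ≠ 0 := fun h ↦ by simpa using congrArg Complex.re h
  have factor : (-I * ((x + I) / N) : ℂ) = (N⁻¹ : ℝ) * (1 - x * I) := by
    push_cast
    linear_combination -(N : ℂ)⁻¹ * Complex.I_sq
  have exponent : (Fintype.card ι * (1 / 2) : ℂ) = (Fintype.card ι / 2 : ℝ) := by
    push_cast
    ring
  rw [Finset.prod_const, Finset.card_univ, ← Complex.cpow_nat_mul, factor, exponent,
    ofReal_mul_cpow (inv_pos.2 (Nat.cast_pos.2 hN)) ne_zero, mul_left_comm, ← Complex.cpow_add _ _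
    ne_zero, neg_add_cancel, Complex.cpow_zero, mul_one, Complex.ofReal_inv, Complex.ofReal_natCast,
    Complex.inv_cpow _ _ (by simp [Complex.natCast_arg, Real.pi_ne_zero.symm]), Complex.cpow_neg]

lemma rescaledIntegrand_eq (a l : ι → ℤ) {N : ℕ} (hN : 0 < N) (ρ : ℚ) (x : ℝ) :
    rescaledIntegrand a l N ρ x = (1 - x * I) ^ (-(Fintype.card ι / 2 : ℝ) : ℂ) *
      (∏ i, (-I * ((x + I) / N)) ^ (1 / 2 : ℂ) * quadTheta (a i) (l i) (ρ + (x + I) / N)) *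
      Complex.exp (-(2 * Real.pi * I * x)) := by
  rw [rescaledIntegrand, natCast_cpow_neg_card_div_two ι hN x, Finset.prod_mul_distrib]
  ring

lemma cpow_neg_mul_circleIntegrand_add_div (a l : ι → ℤ) {N : ℕ} (hN : 0 < N) (ρ : ℚ) (x : ℝ) :
    (N : ℂ) ^ (-(Fintype.card ι / 2 : ℝ) : ℂ) * circleIntegrand a l N (ρ + x / N) =
      Complex.exp (-(2 * Real.pi * I * N * ρ)) * rescaledIntegrand a l N ρ x := by
  have : (N : ℂ) ≠ 0 := Nat.cast_ne_zero.2 hN.ne'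
  have phase : Complex.exp (-(2 * Real.pi * I * N * (ρ + x / N : ℝ))) =
      Complex.exp (-(2 * Real.pi * I * N * ρ)) * Complex.exp (-(2 * Real.pi * I * x)) := by
    rw [← Complex.exp_add]
    congr 1
    push_cast
    field_simp
    ring
  have point : (((ρ + x / N : ℝ) : ℂ) + I / N) = ρ + (x + I) / N := by
    push_cast
    ring
  rw [circleIntegrand, rescaledIntegrand, phase, point]
  ring

/-- The factor `∏ᵢ q⁻¹ (2aᵢ)^(-1/2) ∑_b e(h (aᵢ b² + lᵢ b) / q)` of the term at `ρ = h / q` of the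
singular series. -/
noncomputable def singularTerm (a l : ι → ℤ) (ρ : ℚ) : ℂ :=
  ∏ i, localGaussSum ρ (a i) (l i) 0 / (√(2 * a i) * ρ.den : ℝ)

lemma tendsto_rescaledIntegrand (ha : ∀ i, 0 < a i) (l : ι → ℤ) (ρ : ℚ) (x : ℝ) :
    Tendsto (rescaledIntegrand a l · ρ x) atTop
      (nhds ((1 - x * I) ^ (-(Fintype.card ι / 2 : ℝ) : ℂ) * Complex.exp (-(2 * Real.pi * I * x)) *
        singularTerm a l ρ)) := by
  have im_pos : ∀ᶠ N : ℕ in atTop, 0 < ((x + I) / N : ℂ).im := by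
    filter_upwards [eventually_gt_atTop 0] with N hN
    rw [im_ofReal_add_I_div_natCast]
    positivity
  have cusp : Tendsto (fun N : ℕ ↦ ((x + I) / N : ℂ).im / ‖((x + I) / N : ℂ)‖ ^ 2) atTop atTop := by
    simp_rw [im_ofReal_add_I_div_natCast, sq_norm_ofReal_add_I_div_natCast]
    refine (tendsto_natCast_atTop_atTop.atTop_div_const (by positivity : 0 < 1 + x ^ 2)).congr'
      ((eventually_gt_atTop 0).mono fun N hN ↦ ?_)
    field_simp
  have := ((tendsto_finsetProd Finset.univ fun i _ ↦ tendsto_quadTheta ρ (ha i) (l i) im_pos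
    (tendsto_const_div_atTop_nhds_zero_nat _) cusp).const_mul
    ((1 - x * I) ^ (-(Fintype.card ι / 2 : ℝ) : ℂ))).mul_const
      (Complex.exp (-(2 * Real.pi * I * x)))
  rw [mul_right_comm]
  refine this.congr' ((eventually_gt_atTop 0).mono fun N hN ↦ ?_)
  exact (rescaledIntegrand_eq a l hN ρ x).symm

lemma exists_forall_norm_rescaledIntegrand_le (ha : ∀ i, 0 < a i) (l : ι → ℤ) :
    ∃ C, 0 ≤ C ∧ ∀ (N : ℕ) (ρ : ℚ) (x : ℝ), 0 < N → ρ + x / N ∈ fordArc N ρ →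
      ‖rescaledIntegrand a l N ρ x‖ ≤ C * (ρ.den : ℝ) ^ (-(Fintype.card ι / 2 : ℝ)) *
        (1 + x ^ 2) ^ (-(Fintype.card ι / 4 : ℝ)) := by
  choose C C_pos hC using fun i ↦ exists_forall_norm_quadTheta_le (ha i) (l i)
  refine ⟨∏ i, C i, Finset.prod_nonneg fun i _ ↦ (C_pos i).le, fun N ρ x hN mem ↦ ?_⟩
  have N_pos : (0 : ℝ) < N := Nat.cast_pos.2 hN
  have region : (ρ.den : ℝ) ^ 2 * ‖((x + I) / N : ℂ)‖ ^ 2 ≤ 2 * ((x + I) / N : ℂ).im := by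
    rw [im_ofReal_add_I_div_natCast, sq_norm_ofReal_add_I_div_natCast, ← mul_div_assoc,
      div_le_iff₀ (by positivity)]
    calc (ρ.den : ℝ) ^ 2 * (1 + x ^ 2) ≤ 2 * N := by
          rw [add_comm]
          exact (add_div_mem_fordArc_iff hN ρ x).1 mem
      _ = 2 * (1 / N) * N ^ 2 := by field_simp
  have factor_le (i : ι) : ‖(-I * ((x + I) / N)) ^ (1 / 2 : ℂ) *
      quadTheta (a i) (l i) (ρ + (x + I) / N)‖ ≤ C i / √ρ.den := by
    rw [norm_mul, norm_neg_I_mul_cpow_half]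
    refine hC i ρ _ ?_ ?_ region <;> rw [im_ofReal_add_I_div_natCast]
    · positivity
    · exact div_le_one_of_le₀ (by exact_mod_cast hN) N_pos.le
  have unimodular : ‖Complex.exp (-(2 * Real.pi * I * x))‖ = 1 := by simp [Complex.norm_exp]
  have den_rpow : √(ρ.den : ℝ) ^ Fintype.card ι = (ρ.den : ℝ) ^ (Fintype.card ι / 2 : ℝ) := by
    rw [Real.sqrt_eq_rpow, ← Real.rpow_mul_natCast (Nat.cast_nonneg _)]
    ring_nf
  rw [rescaledIntegrand_eq a l hN, norm_mul, unimodular, mul_one, norm_mul, norm_prod,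
    norm_one_sub_mul_I_cpow, mul_comm]
  calc (∏ i, ‖(-I * ((x + I) / N)) ^ (1 / 2 : ℂ) * quadTheta (a i) (l i) (ρ + (x + I) / N)‖) *
        (1 + x ^ 2) ^ (-(Fintype.card ι / 2 / 2 : ℝ))
      ≤ (∏ i, C i / √ρ.den) * (1 + x ^ 2) ^ (-(Fintype.card ι / 2 / 2 : ℝ)) := by
        gcongr with i
        exact factor_le i
    _ = _ := by
        rw [Finset.prod_div_distrib, Finset.prod_const, Finset.card_univ, den_rpow,
          Real.rpow_neg (Nat.cast_nonneg _), div_eq_mul_inv, div_div]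
        norm_num

/-- `rescaledIntegrand` restricted to the part of the period `(θ, θ + 1]` owned by `ρ`. -/
noncomputable def arcIntegrand (a l : ι → ℤ) (θ : ℝ) (N : ℕ) (ρ : ℚ) : ℝ → ℂ :=
  {x : ℝ | ρ + x / N ∈ Set.Ioc θ (θ + 1) ∩ ownArc N ρ}.indicator (rescaledIntegrand a l N ρ)

lemma cpow_mul_setIntegral_circleIntegrand (a l : ι → ℤ) (θ : ℝ) {N : ℕ} (hN : 0 < N) (ρ : ℚ) :
    (N : ℂ) ^ (1 - (Fintype.card ι / 2 : ℝ) : ℂ) *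
        ∫ α in Set.Ioc θ (θ + 1) ∩ ownArc N ρ, circleIntegrand a l N α =
      Complex.exp (-(2 * Real.pi * I * N * ρ)) * ∫ x, arcIntegrand a l θ N ρ x := by
  have N_ne : (N : ℂ) ≠ 0 := Nat.cast_ne_zero.2 hN.ne'
  have pointwise (x : ℝ) : (N : ℂ) ^ (-(Fintype.card ι / 2 : ℝ) : ℂ) *
      (Set.Ioc θ (θ + 1) ∩ ownArc N ρ).indicator (circleIntegrand a l N) (ρ + x / N) =
        Complex.exp (-(2 * Real.pi * I * N * ρ)) * arcIntegrand a l θ N ρ x := by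
    by_cases h : ρ + x / N ∈ Set.Ioc θ (θ + 1) ∩ ownArc N ρ
    · rw [Set.indicator_of_mem h, arcIntegrand, Set.indicator_of_mem (by exact h),
        cpow_neg_mul_circleIntegrand_add_div a l hN]
    · rw [Set.indicator_of_notMem h, arcIntegrand, Set.indicator_of_notMem (by exact h), mul_zero,
        mul_zero]
  rw [← integral_indicator (measurableSet_Ioc.inter (measurableSet_ownArc N ρ)),
    ← integral_const_mul (Complex.exp _)]
  simp_rw [← pointwise]
  rw [integral_const_mul, Measure.integral_comp_div (fun y ↦ (Set.Ioc θ (θ + 1) ∩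
    ownArc N ρ).indicator (circleIntegrand a l N) (ρ + y)), integral_add_left_eq_self,
    Nat.abs_cast, Complex.real_smul, Complex.ofReal_natCast, ← mul_assoc, sub_eq_neg_add,
    Complex.cpow_add _ _ N_ne, Complex.cpow_one]

lemma eventually_add_div_mem_Ioc_iff (hθ : Irrational θ) (ρ : ℚ) (x : ℝ) :
    ∀ᶠ N : ℕ in atTop, (ρ + x / N ∈ Set.Ioc θ (θ + 1) ↔ (ρ : ℝ) ∈ Set.Ioc θ (θ + 1)) := by
  have off_endpoint {y : ℝ} (hy : Irrational y) :
      ∀ᶠ N : ℕ in atTop, (ρ + x / N < y ↔ ρ < y) ∧ (ρ + x / N ≤ y ↔ ρ ≤ y) := by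
    rcases (hy.ne_rat ρ).lt_or_gt with h | h
    · filter_upwards [(tendsto_add_div_natCast ρ x).eventually (lt_mem_nhds h)] with N hN
      simp [h.not_gt, h.not_ge, hN.not_gt, hN.not_ge]
    · filter_upwards [(tendsto_add_div_natCast ρ x).eventually (gt_mem_nhds h)] with N hN
      simp [h, h.le, hN, hN.le]
  filter_upwards [off_endpoint hθ, off_endpoint (hθ.add_natCast 1)] with N hl hr
  rw [Set.mem_Ioc, Set.mem_Ioc, ← not_le, ← not_le, hl.2]
  simpa using fun _ ↦ hr.2

/-- The terms of the singular series of `∑ (aᵢ tᵢ² + lᵢ tᵢ)` in the period `(θ, θ + 1]`, without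
the phase `e(-N ρ)` that singles out the number `N` to be represented. -/
noncomputable def windowTerm (a l : ι → ℤ) (θ : ℝ) : ℚ → ℂ :=
  {ρ : ℚ | (ρ : ℝ) ∈ Set.Ioc θ (θ + 1)}.indicator (singularTerm a l)

lemma tendsto_arcIntegrand (ha : ∀ i, 0 < a i) (l : ι → ℤ) (hθ : Irrational θ) (ρ : ℚ) (x : ℝ) :
    Tendsto (arcIntegrand a l θ · ρ x) atTop
      (nhds ((1 - x * I) ^ (-(Fintype.card ι / 2 : ℝ) : ℂ) * Complex.exp (-(2 * Real.pi * I * x)) *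
        windowTerm a l θ ρ)) := by
  have window := (eventually_add_div_mem_Ioc_iff hθ ρ x).and (eventually_mem_ownArc ρ x)
  by_cases h : (ρ : ℝ) ∈ Set.Ioc θ (θ + 1)
  · rw [windowTerm, Set.indicator_of_mem (by exact h)]
    refine (tendsto_rescaledIntegrand ha l ρ x).congr' (window.mono fun N hN ↦ ?_)
    exact (Set.indicator_of_mem (by exact ⟨hN.1.2 h, hN.2⟩) _).symm
  · rw [windowTerm, Set.indicator_of_notMem (by exact h), mul_zero]
    refine tendsto_const_nhds.congr' (window.mono fun N hN ↦ ?_)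
    exact (Set.indicator_of_notMem (fun hx ↦ h (hN.1.1 hx.1)) _).symm

lemma exists_forall_norm_arcIntegrand_le (ha : ∀ i, 0 < a i) (l : ι → ℤ) (hθ : θ ∈ Set.Ioo (-1) 0) :
    ∃ C, 0 ≤ C ∧ ∀ (N : ℕ) (ρ : ℚ) (x : ℝ), 2 ≤ N → ‖arcIntegrand a l θ N ρ x‖ ≤
      C * {ρ : ℚ | |ρ| ≤ 2}.indicator (fun ρ ↦ (ρ.den : ℝ) ^ (-(Fintype.card ι / 2 : ℝ))) ρ *
        (1 + x ^ 2) ^ (-(Fintype.card ι / 4 : ℝ)) := by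
  obtain ⟨C, C_nonneg, hC⟩ := exists_forall_norm_rescaledIntegrand_le ha l
  refine ⟨C, C_nonneg, fun N ρ x hN ↦ ?_⟩
  rw [arcIntegrand]
  by_cases h : ρ + x / N ∈ Set.Ioc θ (θ + 1) ∩ ownArc N ρ
  · have N_ge : (2 : ℝ) ≤ N := by exact_mod_cast hN
    have close : |ρ + x / N - ρ| ≤ 1 := abs_le_one_iff_mul_self_le_one.2 <| by
      rw [← sq]
      exact (sub_sq_le_of_mem_fordArc h.2.1).trans (div_le_one_of_le₀ N_ge (by positivity))
    have bounded : |ρ| ≤ 2 := by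
      have := abs_le.1 close
      have : |(ρ : ℝ)| ≤ 2 := abs_le.2 ⟨by linarith [hθ.1, h.1.1], by linarith [hθ.2, h.1.2]⟩
      exact_mod_cast this
    rw [Set.indicator_of_mem (by exact h), Set.indicator_of_mem (by exact bounded)]
    exact hC N ρ x (by omega) h.2.1
  · rw [Set.indicator_of_notMem (by exact h), norm_zero]
    have := Set.indicator_nonneg (s := {ρ : ℚ | |ρ| ≤ 2})
      (f := fun ρ ↦ (ρ.den : ℝ) ^ (-(Fintype.card ι / 2 : ℝ))) (fun _ _ ↦ by positivity) ρ
    positivity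

lemma aestronglyMeasurable_arcIntegrand (ha : ∀ i, 0 < a i) (l : ι → ℤ) (θ : ℝ) {N : ℕ}
    (hN : 0 < N) (ρ : ℚ) : AEStronglyMeasurable (arcIntegrand a l θ N ρ) := by
  have eq : rescaledIntegrand a l N ρ = fun x ↦ (Complex.exp (-(2 * Real.pi * I * N * ρ)))⁻¹ *
      ((N : ℂ) ^ (-(Fintype.card ι / 2 : ℝ) : ℂ) * circleIntegrand a l N (ρ + x / N)) := by
    funext x
    rw [cpow_neg_mul_circleIntegrand_add_div a l hN, inv_mul_cancel_left₀ (Complex.exp_ne_zero _)]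
  have continuous : Continuous (rescaledIntegrand a l N ρ) := by
    have := continuous_circleIntegrand ha l hN
    rw [eq]
    fun_prop
  have : Continuous fun x : ℝ ↦ ρ + x / N := by fun_prop
  exact continuous.aestronglyMeasurable.indicator
    (this.measurable (measurableSet_Ioc.inter (measurableSet_ownArc N ρ)))

lemma integrable_one_add_sq_rpow_neg_card_div_four (hcard : 4 < Fintype.card ι) :
    Integrable fun x : ℝ ↦ (1 + x ^ 2) ^ (-(Fintype.card ι / 4 : ℝ)) := by
  have : (4 : ℝ) < Fintype.card ι := by exact_mod_cast hcard
  refine (integrable_one_sub_mul_I_cpow (s := Fintype.card ι / 2) (by linarith)).norm.congr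
    (.of_forall fun x ↦ ?_)
  simp only [norm_one_sub_mul_I_cpow]
  ring_nf

lemma tendsto_integral_arcIntegrand (ha : ∀ i, 0 < a i) (l : ι → ℤ) (hθ : θ ∈ Set.Ioo (-1) 0)
    (irrational : Irrational θ) (hcard : 4 < Fintype.card ι) (ρ : ℚ) :
    Tendsto (fun N ↦ ∫ x, arcIntegrand a l θ N ρ x) atTop
      (nhds (singularIntegral (Fintype.card ι / 2) * windowTerm a l θ ρ)) := by
  obtain ⟨C, -, hC⟩ := exists_forall_norm_arcIntegrand_le ha l hθ
  rw [singularIntegral, ← integral_mul_const]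
  refine tendsto_integral_filter_of_dominated_convergence _
    ((eventually_gt_atTop 0).mono fun N hN ↦ aestronglyMeasurable_arcIntegrand ha l θ hN ρ)
    ((eventually_ge_atTop 2).mono fun N hN ↦ .of_forall fun x ↦ hC N ρ x hN)
    ((integrable_one_add_sq_rpow_neg_card_div_four hcard).const_mul _)
    (.of_forall fun x ↦ tendsto_arcIntegrand ha l irrational ρ x)

lemma exists_summable_forall_norm_integral_arcIntegrand_le (ha : ∀ i, 0 < a i) (l : ι → ℤ)
    (hθ : θ ∈ Set.Ioo (-1) 0) (hcard : 4 < Fintype.card ι) :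
    ∃ b : ℚ → ℝ, Summable b ∧ ∀ (N : ℕ) (ρ : ℚ), 2 ≤ N →
      ‖∫ x, arcIntegrand a l θ N ρ x‖ ≤ b ρ := by
  have card_gt : (4 : ℝ) < Fintype.card ι := by exact_mod_cast hcard
  obtain ⟨C, -, hC⟩ := exists_forall_norm_arcIntegrand_le ha l hθ
  refine ⟨_, ((summable_indicator_den_rpow (s := Fintype.card ι / 2)
    (by linarith)).mul_left C).mul_right (∫ x : ℝ, (1 + x ^ 2) ^ (-(Fintype.card ι / 4 : ℝ))),
    fun N ρ hN ↦ ?_⟩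
  rw [← integral_const_mul]
  exact norm_integral_le_of_norm_le
    ((integrable_one_add_sq_rpow_neg_card_div_four hcard).const_mul _)
    (.of_forall fun x ↦ hC N ρ x hN)

lemma norm_exp_neg_two_pi_mul (N : ℕ) (ρ : ℚ) :
    ‖Complex.exp (-(2 * Real.pi * I * N * ρ))‖ = 1 := by
  simp [Complex.norm_exp]

lemma hasSum_integral_arcIntegrand (ha : ∀ i, 0 < a i) (l : ι → ℤ) (θ : ℝ) {N : ℕ} (hN : 0 < N) :
    HasSum (fun ρ : ℚ ↦ Complex.exp (-(2 * Real.pi * I * N * ρ)) * ∫ x, arcIntegrand a l θ N ρ x)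
      ((N : ℂ) ^ (1 - (Fintype.card ι / 2 : ℝ) : ℂ) *
        ∫ α in Set.Ioc θ (θ + 1), circleIntegrand a l N α) := by
  simp_rw [← cpow_mul_setIntegral_circleIntegrand a l θ hN]
  have dissection : Set.Ioc θ (θ + 1) = ⋃ ρ, Set.Ioc θ (θ + 1) ∩ ownArc N ρ := by
    rw [← Set.inter_iUnion, iUnion_ownArc hN, Set.inter_univ]
  nth_rw 2 [dissection]
  refine HasSum.mul_left _ (hasSum_integral_iUnion
    (fun ρ ↦ measurableSet_Ioc.inter (measurableSet_ownArc N ρ))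
    (fun ρ σ h ↦ (pairwise_disjoint_ownArc N h).mono Set.inter_subset_right
      Set.inter_subset_right) ?_)
  rw [← dissection]
  exact (continuous_circleIntegrand ha l hN).integrableOn_Ioc

theorem tendsto_cpow_mul_integral_circleIntegrand_sub (ha : ∀ i, 0 < a i) (l : ι → ℤ)
    (hθ : θ ∈ Set.Ioo (-1) 0) (irrational : Irrational θ) (hcard : 4 < Fintype.card ι) :
    Tendsto (fun N : ℕ ↦ (N : ℂ) ^ (1 - (Fintype.card ι / 2 : ℝ) : ℂ) *
        (∫ α in Set.Ioc θ (θ + 1), circleIntegrand a l N α) -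
      singularIntegral (Fintype.card ι / 2) *
        ∑' ρ : ℚ, Complex.exp (-(2 * Real.pi * I * N * ρ)) * windowTerm a l θ ρ)
      atTop (nhds 0) := by
  obtain ⟨b, b_summable, hb⟩ :=
    exists_summable_forall_norm_integral_arcIntegrand_le ha l hθ hcard
  have arc_tendsto := tendsto_integral_arcIntegrand ha l hθ irrational hcard
  have limit_le (ρ : ℚ) : ‖singularIntegral (Fintype.card ι / 2) * windowTerm a l θ ρ‖ ≤ b ρ :=
    le_of_tendsto (arc_tendsto ρ).norm ((eventually_ge_atTop 2).mono fun N hN ↦ hb N ρ hN)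
  have termwise := tendsto_tsum_of_dominated_convergence (𝓕 := atTop) (b_summable.mul_left 2)
    (f := fun (N : ℕ) (ρ : ℚ) ↦ Complex.exp (-(2 * Real.pi * I * N * ρ)) *
      ((∫ x, arcIntegrand a l θ N ρ x) -
        singularIntegral (Fintype.card ι / 2) * windowTerm a l θ ρ)) (g := 0)
    (fun ρ ↦ ?_) ((eventually_ge_atTop 2).mono fun N hN ρ ↦ ?_)
  · simp only [Pi.zero_apply, tsum_zero] at termwise
    refine termwise.congr' ((eventually_ge_atTop 2).mono fun N hN ↦ ?_)
    have limit_summable : Summable fun ρ : ℚ ↦ Complex.exp (-(2 * Real.pi * I * N * ρ)) *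
        (singularIntegral (Fintype.card ι / 2) * windowTerm a l θ ρ) :=
      b_summable.of_norm_bounded fun ρ ↦ by
        rw [norm_mul, norm_exp_neg_two_pi_mul, one_mul]
        exact limit_le ρ
    have sum := hasSum_integral_arcIntegrand ha l θ (N := N) (by omega)
    simp_rw [mul_sub]
    rw [sum.summable.tsum_sub limit_summable, sum.tsum_eq, ← tsum_mul_left]
    simp_rw [mul_left_comm]
  · refine squeeze_zero_norm (fun N ↦ ?_) (tendsto_iff_norm_sub_tendsto_zero.1 (arc_tendsto ρ))
    rw [norm_mul, norm_exp_neg_two_pi_mul, one_mul]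
  · rw [norm_mul, norm_exp_neg_two_pi_mul, one_mul, two_mul]
    exact (norm_sub_le _ _).trans (add_le_add (hb N ρ hN) (limit_le ρ))

end SingularSeries

section SingularSeriesLowerBound

open Filter MeasureTheory
open Complex (I)

variable {ι : Type*} [Fintype ι] {a l : ι → ℤ} {θ : ℝ}

lemma singularTerm_eq_zero {ρ : ℚ} {p : ℕ} (hp : p.Prime) (hpρ : p ∣ ρ.den)
    (h : ∃ i, (p : ℤ) ∣ a i ∧ ¬ (p : ℤ) ∣ l i) : singularTerm a l ρ = 0 := by
  obtain ⟨i, hpa, hpl⟩ := h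
  refine Finset.prod_eq_zero (Finset.mem_univ i) ?_
  simp [localGaussSum, quadGaussSum_zmod_eq_zero ρ.isCoprime_num_den hp hpρ hpa hpl]

lemma localGaussSum_zero (a l : ℤ) : localGaussSum 0 a l 0 = 1 := by
  have trivial_modulus (A B : ZMod 1) : quadGaussSum ZMod.stdAddChar A B = 1 := by
    simp [quadGaussSum, Subsingleton.elim _ (0 : ZMod 1)]
  exact trivial_modulus _ _

lemma windowTerm_zero (a l : ι → ℤ) (hθ : θ ∈ Set.Ioo (-1) 0) :
    windowTerm a l θ 0 = (∏ i, (√(2 * a i))⁻¹ : ℝ) := by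
  have window : ((0 : ℚ) : ℝ) ∈ Set.Ioc θ (θ + 1) := by
    simpa using ⟨hθ.2, by linarith [hθ.1]⟩
  rw [windowTerm, Set.indicator_of_mem (by exact window)]
  simp only [singularTerm, localGaussSum_zero]
  simp

lemma norm_singularTerm_le_of_isCoprime (ha : ∀ i, 0 < a i) (l : ι → ℤ) {ρ : ℚ}
    (h : IsCoprime (2 * ∏ i, a i) (ρ.den : ℤ)) :
    ‖singularTerm a l ρ‖ ≤ (∏ i, (√(2 * a i))⁻¹) * (ρ.den : ℝ) ^ (-(Fintype.card ι / 2 : ℝ)) := by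
  have den_pos : (0 : ℝ) < ρ.den := Nat.cast_pos.2 ρ.den_pos
  have factor_le (i : ι) : ‖localGaussSum ρ (a i) (l i) 0 / (√(2 * a i) * ρ.den : ℝ)‖ ≤
      (√(2 * a i))⁻¹ * (ρ.den : ℝ) ^ (-(1 / 2) : ℝ) := by
    have : (0 : ℝ) < a i := by exact_mod_cast ha i
    have coprime : IsCoprime (2 * a i) ρ.den :=
      h.of_isCoprime_of_dvd_left (mul_dvd_mul_left 2 (Finset.dvd_prod_of_mem a (Finset.mem_univ i)))
    rw [norm_div, Complex.norm_real, Real.norm_of_nonneg (by positivity)]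
    calc ‖localGaussSum ρ (a i) (l i) 0‖ / (√(2 * a i) * ρ.den)
        ≤ √ρ.den / (√(2 * a i) * ρ.den) := by
          gcongr
          exact norm_quadGaussSum_zmod_le_of_isCoprime coprime ρ.isCoprime_num_den _
      _ = (√(2 * a i))⁻¹ * (ρ.den : ℝ) ^ (-(1 / 2) : ℝ) := by
          rw [Real.rpow_neg den_pos.le, ← Real.sqrt_eq_rpow, ← div_div, div_right_comm,
            Real.sqrt_div_self', ← one_div, div_eq_mul_inv, ← one_div, ← one_div, mul_comm]
  rw [singularTerm, norm_prod]
  refine (Finset.prod_le_prod (fun _ _ ↦ norm_nonneg _) fun i _ ↦ factor_le i).trans_eq ?_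
  rw [Finset.prod_mul_distrib, Finset.prod_const, Finset.card_univ, ← Real.rpow_mul_natCast
    den_pos.le]
  ring_nf

/-- The majorant `ρ ↦ ρ.den ^ (-s)` of the terms of the singular series, on the rationals of
`[-2, 2]` with denominator larger than `X`. -/
noncomputable def largeDenRpow (s : ℝ) (X : ℕ) : ℚ → ℝ :=
  {ρ : ℚ | |ρ| ≤ 2 ∧ X < ρ.den}.indicator fun ρ ↦ (ρ.den : ℝ) ^ (-s)

lemma largeDenRpow_nonneg (s : ℝ) (X : ℕ) (ρ : ℚ) : 0 ≤ largeDenRpow s X ρ :=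
  Set.indicator_nonneg (fun _ _ ↦ by positivity) ρ

lemma largeDenRpow_eq_indicator (s : ℝ) (X : ℕ) :
    largeDenRpow s X = {ρ : ℚ | X < ρ.den}.indicator
      ({ρ : ℚ | |ρ| ≤ 2}.indicator fun ρ ↦ (ρ.den : ℝ) ^ (-s)) := by
  rw [Set.indicator_indicator, Set.inter_comm]
  rfl

lemma summable_largeDenRpow {s : ℝ} (hs : 2 < s) (X : ℕ) : Summable (largeDenRpow s X) := by
  rw [largeDenRpow_eq_indicator]
  exact (summable_indicator_den_rpow hs).indicator _

lemma exists_tsum_largeDenRpow_le {s : ℝ} (hs : 2 < s) :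
    ∃ X : ℕ, ∑' ρ, largeDenRpow s X ρ ≤ 1 / 2 := by
  obtain ⟨F, hF⟩ := (summable_indicator_den_rpow hs).tsum_vanishing (Iic_mem_nhds one_half_pos)
  have large_disjoint : Disjoint {ρ : ℚ | F.sup Rat.den < ρ.den} F :=
    Set.disjoint_left.2 fun ρ large mem ↦ (Finset.le_sup (f := Rat.den) mem).not_gt large
  refine ⟨F.sup Rat.den, ?_⟩
  rw [largeDenRpow_eq_indicator, ← tsum_subtype]
  exact hF _ large_disjoint

lemma den_ne_one_of_mem_Ioc (hθ : θ ∈ Set.Ioo (-1) 0) {ρ : ℚ} (hρ : (ρ : ℝ) ∈ Set.Ioc θ (θ + 1))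
    (hne : ρ ≠ 0) : ρ.den ≠ 1 := by
  intro h
  obtain ⟨n, rfl⟩ : ∃ n : ℤ, (n : ℚ) = ρ := ⟨ρ.num, Rat.coe_int_num_of_den_eq_one h⟩
  have lower : ((-1 : ℤ) : ℝ) < n := by simpa using hθ.1.trans hρ.1
  have upper : (n : ℝ) < (1 : ℤ) := by simpa using hρ.2.trans_lt (by linarith [hθ.2])
  have := Int.cast_lt.1 lower
  have := Int.cast_lt.1 upper
  exact hne (by norm_cast; omega)

lemma norm_windowTerm_le (ha : ∀ i, 0 < a i) (hθ : θ ∈ Set.Ioo (-1) 0) {X : ℕ}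
    (hX : ∀ p : ℕ, p.Prime → (p ≤ X ∨ (p : ℤ) ∣ 2 * ∏ i, a i) →
      ∃ i, (p : ℤ) ∣ a i ∧ ¬ (p : ℤ) ∣ l i) {ρ : ℚ} (hρ : ρ ≠ 0) :
    ‖windowTerm a l θ ρ‖ ≤
      (∏ i, (√(2 * a i))⁻¹) * largeDenRpow (Fintype.card ι / 2) X ρ := by
  have rhs_nonneg : 0 ≤ (∏ i, (√(2 * a i))⁻¹) * largeDenRpow (Fintype.card ι / 2) X ρ :=
    mul_nonneg (by positivity) (largeDenRpow_nonneg _ _ _)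
  by_cases window : (ρ : ℝ) ∈ Set.Ioc θ (θ + 1)
  swap
  · rwa [windowTerm, Set.indicator_of_notMem (by exact window), norm_zero]
  rw [windowTerm, Set.indicator_of_mem (by exact window)]
  by_cases bad : ∃ p : ℕ, p.Prime ∧ p ∣ ρ.den ∧ (p ≤ X ∨ (p : ℤ) ∣ 2 * ∏ i, a i)
  · obtain ⟨p, hp, hpρ, hpX⟩ := bad
    rwa [singularTerm_eq_zero hp hpρ (hX p hp hpX), norm_zero]
  · push Not at bad
    have large : X < ρ.den :=
      (bad _ (Nat.minFac_prime (den_ne_one_of_mem_Ioc hθ window hρ)) (Nat.minFac_dvd _)).1.trans_le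
        (Nat.minFac_le ρ.den_pos)
    have bounded : |(ρ : ℝ)| ≤ 2 :=
      abs_le.2 ⟨by linarith [hθ.1, window.1], by linarith [hθ.2, window.2]⟩
    have coprime : IsCoprime (2 * ∏ i, a i) (ρ.den : ℤ) := by
      rw [Int.isCoprime_iff_gcd_eq_one]
      refine Nat.coprime_of_dvd fun p hp hpa hpρ ↦ ?_
      exact (bad p hp (by simpa using hpρ)).2 (Int.natCast_dvd.2 hpa)
    rw [largeDenRpow, Set.indicator_of_mem (by exact ⟨by exact_mod_cast bounded, large⟩)]
    exact norm_singularTerm_le_of_isCoprime ha l coprime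

lemma le_norm_tsum_windowTerm (ha : ∀ i, 0 < a i) (hθ : θ ∈ Set.Ioo (-1) 0)
    (hcard : 4 < Fintype.card ι) {X : ℕ}
    (hX : ∀ p : ℕ, p.Prime → (p ≤ X ∨ (p : ℤ) ∣ 2 * ∏ i, a i) →
      ∃ i, (p : ℤ) ∣ a i ∧ ¬ (p : ℤ) ∣ l i)
    (tail : ∑' ρ, largeDenRpow (Fintype.card ι / 2) X ρ ≤ 1 / 2) (N : ℕ) :
    (∏ i, (√(2 * a i))⁻¹) / 2 ≤
      ‖∑' ρ : ℚ, Complex.exp (-(2 * Real.pi * I * N * ρ)) * windowTerm a l θ ρ‖ := by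
  set K : ℝ := ∏ i, (√(2 * a i))⁻¹
  set f : ℚ → ℂ := fun ρ ↦ Complex.exp (-(2 * Real.pi * I * N * ρ)) * windowTerm a l θ ρ
  have majorant_summable : Summable fun ρ ↦ K * largeDenRpow (Fintype.card ι / 2) X ρ := by
    have card_gt : (4 : ℝ) < Fintype.card ι := by exact_mod_cast hcard
    exact (summable_largeDenRpow (by linarith) X).mul_left K
  have rest_le (ρ : ℚ) :
      ‖if ρ = 0 then 0 else f ρ‖ ≤ K * largeDenRpow (Fintype.card ι / 2) X ρ := by
    split_ifs with h
    · rw [norm_zero]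
      exact mul_nonneg (by positivity) (largeDenRpow_nonneg _ _ _)
    · rw [norm_mul, norm_exp_neg_two_pi_mul, one_mul]
      exact norm_windowTerm_le ha hθ hX h
  have rest_summable := majorant_summable.of_norm_bounded rest_le
  have norm_rest : ‖∑' ρ, if ρ = 0 then 0 else f ρ‖ ≤ K / 2 :=
    calc ‖∑' ρ, if ρ = 0 then 0 else f ρ‖ ≤ ∑' ρ, K * largeDenRpow (Fintype.card ι / 2) X ρ :=
          tsum_of_norm_bounded majorant_summable.hasSum rest_le
      _ = K * ∑' ρ, largeDenRpow (Fintype.card ι / 2) X ρ := tsum_mul_left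
      _ ≤ K * (1 / 2) := mul_le_mul_of_nonneg_left tail (by positivity)
      _ = K / 2 := mul_one_div K 2
  have f_zero : f 0 = K := by
    simp only [f, windowTerm_zero a l hθ, K, Rat.cast_zero, mul_zero, neg_zero, Complex.exp_zero,
      one_mul]
  have split : HasSum f (f 0 + ∑' ρ, if ρ = 0 then 0 else f ρ) := by
    convert (hasSum_ite_eq 0 (f 0)).add rest_summable.hasSum using 1
    funext ρ
    split_ifs with h <;> simp [h]
  calc K / 2 = ‖f 0‖ - K / 2 := by
        rw [f_zero, Complex.norm_real, Real.norm_of_nonneg (by positivity)]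
        ring
    _ ≤ ‖f 0‖ - ‖∑' ρ, if ρ = 0 then 0 else f ρ‖ := by gcongr
    _ ≤ ‖∑' ρ, f ρ‖ := by
        rw [split.tsum_eq]
        exact norm_sub_le_norm_add _ _

theorem exists_forall_exists_sum_eq (hcard : 4 < Fintype.card ι) :
    ∃ X : ℕ, ∀ a l : ι → ℤ, (∀ i, 0 < a i) →
      (∀ p : ℕ, p.Prime → (p ≤ X ∨ (p : ℤ) ∣ 2 * ∏ i, a i) →
        ∃ i, (p : ℤ) ∣ a i ∧ ¬ (p : ℤ) ∣ l i) →
      ∀ᶠ N : ℕ in atTop, ∃ t : ι → ℤ, ∑ i, (a i * t i ^ 2 + l i * t i) = N := by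
  have card_gt : (4 : ℝ) < Fintype.card ι := by exact_mod_cast hcard
  obtain ⟨θ, irrational, hθ⟩ := exists_irrational_btwn (neg_one_lt_zero (R := ℝ))
  obtain ⟨X, tail⟩ := exists_tsum_largeDenRpow_le (s := Fintype.card ι / 2) (by linarith)
  refine ⟨X, fun a l ha hX ↦ ?_⟩
  have J_ne := singularIntegral_ne_zero (s := Fintype.card ι / 2) (by linarith)
  have K_pos : 0 < ∏ i, (√(2 * a i))⁻¹ := Finset.prod_pos fun i _ ↦ by
    have : (0 : ℝ) < a i := by exact_mod_cast ha i
    positivity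
  have small := (tendsto_zero_iff_norm_tendsto_zero.1
    (tendsto_cpow_mul_integral_circleIntegrand_sub ha l hθ irrational hcard)).eventually_lt_const
    (mul_pos (norm_pos_iff.2 J_ne) (half_pos K_pos))
  filter_upwards [small, eventually_gt_atTop 0] with N hN N_pos
  by_contra! hrep
  rw [integral_circleIntegrand_eq_zero ha N_pos hrep, mul_zero, zero_sub, norm_neg, norm_mul] at hN
  exact hN.not_ge (mul_le_mul_of_nonneg_left (le_norm_tsum_windowTerm ha hθ hcard hX tail N)
    (norm_nonneg _))

end SingularSeriesLowerBound

section OrthogonalBasis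

lemma exists_intCast_eq_smul {ι : Type*} [Finite ι] (v : ι → ℚ) :
    ∃ d : ℤ, d ≠ 0 ∧ ∃ b : ι → ℤ, (fun j ↦ (b j : ℚ)) = (d : ℚ) • v := by
  obtain ⟨d, hd⟩ := IsLocalization.exist_integer_multiples_of_finite (nonZeroDivisors ℤ) v
  choose b hb using hd
  refine ⟨d, nonZeroDivisors.coe_ne_zero d, b, funext fun j ↦ ?_⟩
  simpa [Submonoid.smul_def] using hb j

variable {ι : Type*} [Fintype ι]

lemma intCast_dotProduct_mulVec {K : Type*} [CommRing K] (M : Matrix ι ι ℤ) (u v : ι → ℤ) :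
    ((u ⬝ᵥ M *ᵥ v : ℤ) : K) =
      (fun i ↦ (u i : K)) ⬝ᵥ M.map (↑) *ᵥ fun i ↦ (v i : K) := by
  simp [dotProduct, mulVec]

lemma dotProduct_mulVec_pos {M : Matrix ι ι ℤ} (hM : M.PosDef) {u : ι → ℤ} (hu : u ≠ 0) :
    0 < u ⬝ᵥ M *ᵥ u := by
  simpa using hM.dotProduct_mulVec_pos hu

lemma dotProduct_mulVec_comm {R : Type*} [CommSemiring R] {M : Matrix ι ι R} (hM : M.IsSymm)
    (u v : ι → R) : u ⬝ᵥ M *ᵥ v = v ⬝ᵥ M *ᵥ u := by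
  rw [dotProduct_mulVec, ← mulVec_transpose, hM.eq, dotProduct_comm]

lemma apply_self_eq_sum_of_isOrthoᵢ {K V : Type*} [Field K] [AddCommGroup V] [Module K V]
    {B : LinearMap.BilinForm K V} {v : Module.Basis ι K V} (hv : LinearMap.IsOrthoᵢ B v)
    (hB : ∀ i, B (v i) (v i) ≠ 0) (y : V) :
    B y y = ∑ i, B (v i) y ^ 2 / B (v i) (v i) := by
  classical
  have coord (i : ι) : B (v i) y = v.repr y i * B (v i) (v i) := by
    conv_lhs => rw [← v.sum_repr y, map_sum]
    rw [Finset.sum_eq_single_of_mem i (Finset.mem_univ i) fun j _ hj ↦ by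
      rw [map_smul, show B (v i) (v j) = 0 from hv hj.symm, smul_zero], map_smul, smul_eq_mul]
  conv_lhs => enter [1]; rw [← v.sum_repr y]
  rw [map_sum, LinearMap.sum_apply]
  refine Finset.sum_congr rfl fun i _ ↦ ?_
  rw [map_smul, LinearMap.smul_apply, smul_eq_mul, coord i]
  field_simp [hB i]

lemma exists_isOrthoᵢ_basis_toBilin' [DecidableEq ι] {K : Type*} [Field K] [NeZero (2 : K)]
    {M : Matrix ι ι K} (hM : M.IsSymm) :
    ∃ v : Module.Basis ι K (ι → K), LinearMap.IsOrthoᵢ (toBilin' M) v := by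
  have : Invertible (2 : K) := invertibleOfNonzero two_ne_zero
  have symm : LinearMap.IsSymm (toBilin' M) :=
    ⟨(Matrix.isSymm_toBilin'_iff_isSymm.2 hM).eq⟩
  obtain ⟨v, hv⟩ := LinearMap.BilinForm.exists_orthogonal_basis symm
  let e : Fin (Module.finrank K (ι → K)) ≃ ι :=
    (finCongr (Module.finrank_fintype_fun_eq_card K)).trans (Fintype.equivFin ι).symm
  refine ⟨v.reindex e, fun i j hij ↦ ?_⟩
  simpa [Function.onFun] using hv fun h ↦ hij (e.symm.injective h)

/-- The last clause is Parseval's identity cleared of denominators. -/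
lemma exists_orthogonal_int_basis [DecidableEq ι] {M : Matrix ι ι ℤ} (hM : M.PosDef) :
    ∃ b : ι → ι → ℤ, (Pairwise fun i j ↦ b i ⬝ᵥ M *ᵥ b j = 0) ∧
      (∀ i, 0 < b i ⬝ᵥ M *ᵥ b i) ∧
      ∀ y : ι → ℤ, (∏ i, b i ⬝ᵥ M *ᵥ b i) * (y ⬝ᵥ M *ᵥ y) =
        ∑ i, (b i ⬝ᵥ M *ᵥ y) ^ 2 * ∏ j ∈ Finset.univ.erase i, b j ⬝ᵥ M *ᵥ b j := by
  have symm : (M.map ((↑) : ℤ → ℚ)).IsSymm :=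
    (isHermitian_iff_isSymm.1 hM.isHermitian).map _
  obtain ⟨v, hv⟩ := exists_isOrthoᵢ_basis_toBilin' symm
  set B := toBilin' (M.map ((↑) : ℤ → ℚ))
  choose d hd b hb using fun i ↦ exists_intCast_eq_smul (v i)
  have cast_eq (u w : ι → ℤ) :
      ((u ⬝ᵥ M *ᵥ w : ℤ) : ℚ) = B (fun i ↦ (u i : ℚ)) fun i ↦ (w i : ℚ) := by
    rw [intCast_dotProduct_mulVec, Matrix.toBilin'_apply']
  have hd' (i : ι) : (d i : ℚ) ≠ 0 := Int.cast_ne_zero.2 (hd i)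
  have cast_b (i : ι) (w : ι → ℤ) :
      ((b i ⬝ᵥ M *ᵥ w : ℤ) : ℚ) = d i * B (v i) fun i ↦ (w i : ℚ) := by
    rw [cast_eq, hb, map_smul, LinearMap.smul_apply, smul_eq_mul]
  have cast_bb (i j : ι) : ((b i ⬝ᵥ M *ᵥ b j : ℤ) : ℚ) = d i * (d j * B (v i) (v j)) := by
    rw [cast_b, hb, map_smul, smul_eq_mul]
  have b_ne (i : ι) : b i ≠ 0 := fun h ↦ smul_ne_zero (hd' i) (v.ne_zero i) <| by
    rw [← hb, h]
    exact funext fun _ ↦ Int.cast_zero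
  have b_pos (i : ι) : 0 < b i ⬝ᵥ M *ᵥ b i := dotProduct_mulVec_pos hM (b_ne i)
  have b_ne' (i : ι) : ((b i ⬝ᵥ M *ᵥ b i : ℤ) : ℚ) ≠ 0 := Int.cast_ne_zero.2 (b_pos i).ne'
  have v_ne (i : ι) : B (v i) (v i) ≠ 0 := fun h ↦ b_ne' i (by rw [cast_bb, h]; ring)
  refine ⟨b, fun i j hij ↦ ?_, b_pos, fun y ↦ ?_⟩
  · change b i ⬝ᵥ M *ᵥ b j = 0
    rw [← Int.cast_eq_zero (α := ℚ), cast_bb, show B (v i) (v j) = 0 from hv hij]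
    ring
  · rw [← Int.cast_inj (α := ℚ), Int.cast_mul, cast_eq y y, apply_self_eq_sum_of_isOrthoᵢ hv v_ne,
      Finset.mul_sum, Int.cast_sum]
    refine Finset.sum_congr rfl fun i _ ↦ ?_
    rw [← Finset.mul_prod_erase _ _ (Finset.mem_univ i), Int.cast_mul, cast_bb, Int.cast_mul,
      Int.cast_pow, cast_b]
    field_simp [v_ne i]

lemma dotProduct_mulVec_self_add_sum_smul {R : Type*} [CommRing R] {M : Matrix ι ι R}
    (hM : M.IsSymm) {b : ι → ι → R} (hb : Pairwise fun i j ↦ b i ⬝ᵥ M *ᵥ b j = 0)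
    (y s : ι → R) :
    (y + ∑ j, s j • b j) ⬝ᵥ M *ᵥ (y + ∑ j, s j • b j) =
      y ⬝ᵥ M *ᵥ y + ∑ j, (s j ^ 2 * (b j ⬝ᵥ M *ᵥ b j) + 2 * s j * (b j ⬝ᵥ M *ᵥ y)) := by
  have diag (i : ι) : b i ⬝ᵥ M *ᵥ ∑ j, s j • b j = s i * (b i ⬝ᵥ M *ᵥ b i) := by
    rw [mulVec_sum, dotProduct_sum, Finset.sum_eq_single_of_mem i (Finset.mem_univ i)
      fun j _ hj ↦ by rw [mulVec_smul, dotProduct_smul, hb hj.symm, smul_zero], mulVec_smul,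
      dotProduct_smul, smul_eq_mul]
  have cross : (∑ j, s j • b j) ⬝ᵥ M *ᵥ y = ∑ j, s j * (b j ⬝ᵥ M *ᵥ y) := by
    simp only [sum_dotProduct, smul_dotProduct, smul_eq_mul]
  have square : (∑ j, s j • b j) ⬝ᵥ M *ᵥ (∑ j, s j • b j) =
      ∑ j, s j * (s j * (b j ⬝ᵥ M *ᵥ b j)) := by
    simp only [sum_dotProduct, smul_dotProduct, smul_eq_mul, diag]
  rw [mulVec_add, add_dotProduct, dotProduct_add, dotProduct_add,
    dotProduct_mulVec_comm hM y (∑ j, s j • b j), cross, square, add_assoc,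
    ← Finset.sum_add_distrib, ← Finset.sum_add_distrib]
  refine congrArg (y ⬝ᵥ M *ᵥ y + ·) ?_
  exact Finset.sum_congr rfl fun j _ ↦ by ring

end OrthogonalBasis

section LocalGlobal

variable {ι : Type*} [Fintype ι]

lemma pow_succ_dvd_of_dvd_ediv_gcd {p P c : ℤ} {e : ℕ} (hP : P ≠ 0) (he : p ^ e ∣ P)
    (h : p ∣ c / Int.gcd c P) : p ^ (e + 1) ∣ c := by
  set g : ℤ := (Int.gcd c P : ℤ)
  have gcd_pos : 0 < Int.gcd c P := Int.gcd_pos_of_ne_zero_right c hP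
  have coprime : IsCoprime (c / g) (P / g) :=
    Int.isCoprime_iff_gcd_eq_one.2 (Int.gcd_div_gcd_div_gcd gcd_pos)
  have pow_dvd : p ^ e ∣ g := by
    refine (coprime.of_isCoprime_of_dvd_left h).pow_left.dvd_of_dvd_mul_right ?_
    rwa [Int.mul_ediv_cancel' (Int.gcd_dvd_right c P)]
  rw [← Int.mul_ediv_cancel' (Int.gcd_dvd_left c P), pow_succ]
  exact mul_dvd_mul pow_dvd h

lemma exists_not_dvd_ediv_gcd {p P m : ℤ} (hp : Prime p) (hP : P ≠ 0) (hpP : p ∣ P)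
    (hmP : m ∣ P) {c w : ι → ℤ} (h : P ^ 2 ∣ ∑ i, c i ^ 2 * w i - m) :
    ∃ i, ¬ p ∣ c i / Int.gcd (c i) P := by
  by_contra! dvd
  have finite : FiniteMultiplicity p P := .of_prime_left hp hP
  set e := multiplicity p P
  have e_pos : 1 ≤ e := finite.le_multiplicity_of_pow_dvd (by rwa [pow_one])
  have pow_dvd : p ^ e ∣ P := pow_multiplicity_dvd p P
  have dvd_sum : p ^ (e + 1) ∣ ∑ i, c i ^ 2 * w i := Finset.dvd_sum fun i _ ↦
    ((pow_succ_dvd_of_dvd_ediv_gcd hP pow_dvd (dvd i)).trans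
      (dvd_pow_self _ two_ne_zero)).mul_right _
  have dvd_sq : p ^ (e + 1) ∣ P ^ 2 :=
    calc p ^ (e + 1) ∣ p ^ (e * 2) := pow_dvd_pow p (by lia)
      _ = (p ^ e) ^ 2 := pow_mul p e 2
      _ ∣ P ^ 2 := pow_dvd_pow_of_dvd pow_dvd 2
  have dvd_m : p ^ (e + 1) ∣ m := (dvd_sub_right dvd_sum).1 (dvd_sq.trans h)
  exact finite.not_pow_dvd_of_multiplicity_lt e.lt_succ_self (dvd_m.trans hmP)

/-- The modulus `P` is divisible by all bad primes, and `uᵢ = P / gcd (2 B(bᵢ, y), P)`. -/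
lemma exists_rescaling [DecidableEq ι] {M : Matrix ι ι ℤ} {b : ι → ι → ℤ}
    (hb : ∀ i, 0 < b i ⬝ᵥ M *ᵥ b i)
    (parseval : ∀ y : ι → ℤ, (∏ i, b i ⬝ᵥ M *ᵥ b i) * (y ⬝ᵥ M *ᵥ y) =
      ∑ i, (b i ⬝ᵥ M *ᵥ y) ^ 2 * ∏ j ∈ Finset.univ.erase i, b j ⬝ᵥ M *ᵥ b j)
    {n₀ : ℤ} (hn₀ : n₀ ≠ 0) (hloc : ∀ Q : ℤ, 0 < Q → ∃ y : ι → ℤ, Q ∣ y ⬝ᵥ M *ᵥ y - n₀) (X : ℕ) :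
    ∃ P : ℤ, 0 < P ∧ ∃ y u l : ι → ℤ, P ^ 3 ∣ y ⬝ᵥ M *ᵥ y - n₀ ∧ (∀ i, 0 < u i) ∧
      (∀ i, u i * (2 * (b i ⬝ᵥ M *ᵥ y)) = P * l i) ∧
      ∀ p : ℕ, p.Prime →
        (p ≤ X ∨ (p : ℤ) ∣ 2 * ∏ i, (b i ⬝ᵥ M *ᵥ b i) * P * u i ^ 2) →
        ∃ i, (p : ℤ) ∣ (b i ⬝ᵥ M *ᵥ b i) * P * u i ^ 2 ∧ ¬ (p : ℤ) ∣ l i := by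
  set A : ι → ℤ := fun i ↦ b i ⬝ᵥ M *ᵥ b i
  have prod_pos : 0 < ∏ i, A i := Finset.prod_pos fun i _ ↦ hb i
  set m : ℤ := 4 * (∏ i, A i) * n₀
  set P : ℤ := X.factorial * |m|
  have P_pos : 0 < P := by positivity
  have m_dvd : m ∣ P := (self_dvd_abs m).mul_left _
  obtain ⟨y, hy⟩ := hloc (P ^ 3) (by positivity)
  set c : ι → ℤ := fun i ↦ 2 * (b i ⬝ᵥ M *ᵥ y)
  have gcd_dvd (i : ι) : (Int.gcd (c i) P : ℤ) ∣ P := Int.gcd_dvd_right _ _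
  refine ⟨P, P_pos, y, fun i ↦ P / Int.gcd (c i) P, fun i ↦ c i / Int.gcd (c i) P, hy,
    fun i ↦ Int.ediv_pos_of_pos_of_dvd P_pos (by positivity) (gcd_dvd i), fun i ↦ ?_,
    fun p hp bad ↦ ?_⟩
  · rw [← Int.mul_ediv_assoc _ (Int.gcd_dvd_left _ _), Int.mul_ediv_assoc' _ (gcd_dvd i)]
  have p_prime : Prime (p : ℤ) := Nat.prime_iff_prime_int.1 hp
  have A_dvd (i : ι) : A i ∣ m :=
    ((Finset.dvd_prod_of_mem A (Finset.mem_univ i)).mul_left 4).mul_right n₀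
  have p_dvd : (p : ℤ) ∣ P := by
    rcases bad with le | dvd
    · exact (Int.natCast_dvd_natCast.2 ((hp.dvd_factorial).2 le)).mul_right _
    rcases p_prime.dvd_or_dvd dvd with two | prod
    · exact (two.trans ⟨2 * (∏ i, A i) * n₀, by ring⟩).trans m_dvd
    · obtain ⟨i, -, hi⟩ := p_prime.exists_mem_finset_dvd prod
      refine p_prime.dvd_of_dvd_pow (n := 4) (hi.trans ?_)
      rw [show P ^ 4 = P * P * P ^ 2 by ring]
      exact mul_dvd_mul (mul_dvd_mul_right ((A_dvd i).trans m_dvd) P)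
        (pow_dvd_pow_of_dvd (Int.ediv_dvd_of_dvd (gcd_dvd i)) 2)
  have sum_sub : ∑ i, c i ^ 2 * ∏ j ∈ Finset.univ.erase i, A j - m =
      4 * (∏ i, A i) * (y ⬝ᵥ M *ᵥ y - n₀) := by
    rw [mul_sub, mul_assoc 4, parseval, Finset.mul_sum]
    exact congrArg (· - m) (Finset.sum_congr rfl fun i _ ↦ by ring)
  obtain ⟨i, hi⟩ := exists_not_dvd_ediv_gcd p_prime P_pos.ne' p_dvd m_dvd
    (sum_sub ▸ ((pow_dvd_pow P (Nat.le_succ 2)).trans hy).mul_left _)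
  exact ⟨i, (p_dvd.mul_left _).mul_right _, hi⟩

/-- In an orthogonal basis `b` the substitution `y + ∑ P² uᵢ tᵢ bᵢ` turns the quadratic form into
an inhomogeneous diagonal one. -/
theorem exists_forall_dvd_sub_exists_dotProduct_mulVec_eq {M : Matrix ι ι ℤ} (hM : M.PosDef)
    (hcard : 4 < Fintype.card ι) {n₀ : ℤ} (hn₀ : n₀ ≠ 0)
    (hloc : ∀ Q : ℤ, 0 < Q → ∃ y : ι → ℤ, Q ∣ y ⬝ᵥ M *ᵥ y - n₀) :
    ∃ D : ℤ, 0 < D ∧ ∃ N₀ : ℤ, ∀ n ≥ N₀, D ∣ n - n₀ → ∃ y : ι → ℤ, y ⬝ᵥ M *ᵥ y = n := by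
  classical
  obtain ⟨X, represented⟩ := exists_forall_exists_sum_eq hcard
  obtain ⟨b, b_orth, b_pos, parseval⟩ := exists_orthogonal_int_basis hM
  obtain ⟨P, P_pos, y, u, l, hy, u_pos, u_mul, bad_prime⟩ :=
    exists_rescaling b_pos parseval hn₀ hloc X
  obtain ⟨N₀, hN₀⟩ := Filter.eventually_atTop.1 <|
    represented (fun i ↦ (b i ⬝ᵥ M *ᵥ b i) * P * u i ^ 2) l
      (fun i ↦ mul_pos (mul_pos (b_pos i) P_pos) (pow_pos (u_pos i) 2)) bad_prime
  refine ⟨P ^ 3, by positivity, y ⬝ᵥ M *ᵥ y + P ^ 3 * N₀, fun n hn hdvd ↦ ?_⟩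
  obtain ⟨N, hN⟩ : P ^ 3 ∣ n - y ⬝ᵥ M *ᵥ y := by
    simpa using dvd_sub hdvd hy
  have N_ge : (N₀ : ℤ) ≤ N := le_of_mul_le_mul_left (by linarith) (pow_pos P_pos 3)
  lift N to ℕ using (Int.natCast_nonneg N₀).trans N_ge
  obtain ⟨t, ht⟩ := hN₀ N (by exact_mod_cast N_ge)
  refine ⟨y + ∑ j, (P ^ 2 * u j * t j) • b j, ?_⟩
  rw [dotProduct_mulVec_self_add_sum_smul (isHermitian_iff_isSymm.1 hM.isHermitian) b_orth,
    eq_add_of_sub_eq' hN, ← ht, Finset.mul_sum]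
  refine congrArg (y ⬝ᵥ M *ᵥ y + ·) (Finset.sum_congr rfl fun i _ ↦ ?_)
  linear_combination P ^ 2 * t i * u_mul i

end LocalGlobal

section PadicIsotropy

open QuadraticMap

variable {ι κ : Type*} [Fintype ι] [Fintype κ]

lemma not_anisotropic_weightedSumSquares_iff {R : Type*} [CommRing R] {a : ι → R} :
    ¬ (weightedSumSquares R a).Anisotropic ↔ ∃ x : ι → R, x ≠ 0 ∧ ∑ i, a i * x i ^ 2 = 0 := by
  simp only [not_anisotropic_iff_exists, weightedSumSquares_apply, smul_eq_mul, ← pow_two]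

lemma not_anisotropic_weightedSumSquares_of_comp {R : Type*} [CommRing R] {a : ι → R} {g : κ → ι}
    (hg : g.Injective) (h : ¬ (weightedSumSquares R (a ∘ g)).Anisotropic) :
    ¬ (weightedSumSquares R a).Anisotropic := by
  rw [not_anisotropic_weightedSumSquares_iff] at h ⊢
  obtain ⟨x, hx, sum⟩ := h
  refine ⟨Function.extend g x 0, fun h ↦ hx ?_, ?_⟩
  · rw [← Function.extend_comp hg x 0, h, Pi.zero_comp]
  · rw [← sum]
    refine (Fintype.sum_of_injective g hg _ _ (fun i hi ↦ ?_) fun k ↦ ?_).symm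
    · rw [Function.extend_apply' _ _ _ hi, Pi.zero_apply, zero_pow two_ne_zero, mul_zero]
    · rw [hg.extend_apply, Function.comp_apply]

lemma not_anisotropic_weightedSumSquares_of_mul_sq {K : Type*} [Field K] {a b d : ι → K} {c : K}
    (hc : c ≠ 0) (hd : ∀ i, d i ≠ 0) (hab : ∀ i, c * a i = b i * d i ^ 2)
    (h : ¬ (weightedSumSquares K b).Anisotropic) : ¬ (weightedSumSquares K a).Anisotropic := by
  rw [not_anisotropic_weightedSumSquares_iff] at h ⊢
  obtain ⟨x, hx, sum⟩ := h
  obtain ⟨i, hi⟩ := Function.ne_iff.1 hx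
  refine ⟨fun i ↦ x i / d i, Function.ne_iff.2 ⟨i, div_ne_zero hi (hd i)⟩, ?_⟩
  refine (mul_eq_zero.1 ?_).resolve_left hc
  rw [← sum, Finset.mul_sum]
  refine Finset.sum_congr rfl fun i _ ↦ ?_
  rw [div_pow, ← mul_assoc, hab]
  field_simp [hd i]

variable {p : ℕ} [Fact p.Prime]

lemma isSquare_of_four_mul_dvd_sub_one {c : ℤ_[p]} (h : 4 * (p : ℤ_[p]) ∣ c - 1) : IsSquare c := by
  obtain ⟨r, hr⟩ := h
  have deriv : (Polynomial.X ^ 2 - Polynomial.C c).derivative.aeval (1 : ℤ_[p]) = 2 := by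
    norm_num
  have close : ‖(Polynomial.X ^ 2 - Polynomial.C c).aeval (1 : ℤ_[p])‖ < ‖(2 : ℤ_[p])‖ ^ 2 := by
    have eval : (Polynomial.X ^ 2 - Polynomial.C c).aeval (1 : ℤ_[p]) = -(2 ^ 2 * (p * r)) := by
      simp only [map_sub, map_pow, Polynomial.aeval_X, Polynomial.aeval_C, Algebra.algebraMap_self,
        RingHom.id_apply]
      linear_combination -hr
    rw [eval, norm_neg, norm_mul, norm_pow]
    have : 0 < ‖(2 : ℤ_[p])‖ := norm_pos_iff.2 two_ne_zero
    refine mul_lt_of_lt_one_right (by positivity) ?_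
    exact (PadicInt.norm_lt_one_iff_dvd _).2 (dvd_mul_right _ _)
  obtain ⟨z, hz, -⟩ := hensels_lemma (F := Polynomial.X ^ 2 - Polynomial.C c) (a := 1)
    (by rwa [deriv])
  refine ⟨z, ?_⟩
  simp only [map_sub, map_pow, Polynomial.aeval_X, Polynomial.aeval_C, Algebra.algebraMap_self,
    RingHom.id_apply] at hz
  linear_combination -hz

lemma not_anisotropic_weightedSumSquares_of_dvd {a y : ι → ℤ_[p]} {i : ι} (ha : IsUnit (a i))
    (hy : IsUnit (y i)) (h : 4 * (p : ℤ_[p]) ∣ ∑ j, a j * y j ^ 2) :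
    ¬ (weightedSumSquares ℤ_[p] a).Anisotropic := by
  classical
  rw [not_anisotropic_weightedSumSquares_iff]
  rw [← Finset.add_sum_erase _ _ (Finset.mem_univ i)] at h
  set s := ∑ j ∈ Finset.univ.erase i, a j * y j ^ 2
  obtain ⟨v, hv⟩ := ha.mul (hy.pow 2)
  rw [← hv] at h
  have dvd : 4 * (p : ℤ_[p]) ∣ -(v⁻¹ : ℤ_[p]ˣ) * s - 1 := by
    have := h.mul_left (-(v⁻¹ : ℤ_[p]ˣ) : ℤ_[p])
    rwa [mul_add, neg_mul, Units.inv_mul, neg_add_eq_sub] at this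
  obtain ⟨w, hw⟩ := isSquare_of_four_mul_dvd_sub_one dvd
  have w_ne : w ≠ 0 := by
    rintro rfl
    rw [hw, mul_zero, zero_sub, dvd_neg] at dvd
    exact PadicInt.prime_p.not_isUnit (isUnit_of_dvd_one ((dvd_mul_left _ _).trans dvd))
  refine ⟨Function.update y i (w * y i), Function.ne_iff.2 ⟨i, ?_⟩, ?_⟩
  · rw [Function.update_self]
    exact mul_ne_zero w_ne hy.ne_zero
  · have rest : ∑ j ∈ Finset.univ.erase i, a j * Function.update y i (w * y i) j ^ 2 = s :=
      Finset.sum_congr rfl fun j hj ↦ by rw [Function.update_of_ne (Finset.ne_of_mem_erase hj)]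
    rw [← Finset.add_sum_erase _ _ (Finset.mem_univ i), rest, Function.update_self]
    calc a i * (w * y i) ^ 2 + s = v * (w * w) + s := by rw [hv]; ring
      _ = 0 := by rw [← hw, neg_mul, mul_neg, Units.mul_inv_cancel_left, neg_add_cancel]

lemma dvd_iff_toZMod_eq_zero {x : ℤ_[p]} : (p : ℤ_[p]) ∣ x ↔ PadicInt.toZMod x = 0 := by
  rw [← RingHom.mem_ker, PadicInt.ker_toZMod, PadicInt.maximalIdeal_eq_span_p,
    Ideal.mem_span_singleton]

lemma exists_mul_sq_add_mul_sq_eq {F : Type*} [Field F] [Finite F] (hF : ringChar F ≠ 2)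
    {a b : F} (ha : a ≠ 0) (hb : b ≠ 0) (c : F) : ∃ s t : F, a * s ^ 2 + b * t ^ 2 = c := by
  have := Fintype.ofFinite F
  obtain ⟨s, t, h⟩ := FiniteField.exists_root_sum_quadratic
    (Polynomial.degree_quadratic ha (b := 0) (c := -c))
    (Polynomial.degree_quadratic hb (b := 0) (c := 0)) (FiniteField.odd_card_of_char_ne_two hF)
  refine ⟨s, t, ?_⟩
  simp only [Polynomial.eval_add, Polynomial.eval_mul, Polynomial.eval_C, Polynomial.eval_pow,
    Polynomial.eval_X, zero_mul, add_zero] at h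
  linear_combination h

lemma not_anisotropic_of_three_units (hp : p ≠ 2) (u : Fin 3 → ℤ_[p]ˣ) :
    ¬ (weightedSumSquares ℤ_[p] fun i ↦ (u i : ℤ_[p])).Anisotropic := by
  have ne_zero (i : Fin 3) : PadicInt.toZMod (u i : ℤ_[p]) ≠ 0 :=
    ((u i).isUnit.map PadicInt.toZMod).ne_zero
  obtain ⟨s, t, hst⟩ := exists_mul_sq_add_mul_sq_eq (by rwa [ZMod.ringChar_zmod_n])
    (ne_zero 0) (ne_zero 1) (-PadicInt.toZMod (u 2 : ℤ_[p]))
  obtain ⟨s, rfl⟩ := ZMod.ringHom_surjective PadicInt.toZMod s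
  obtain ⟨t, rfl⟩ := ZMod.ringHom_surjective PadicInt.toZMod t
  have four_unit : IsUnit (4 : ℤ_[p]) := by
    have coprime : Nat.Coprime 4 p :=
      ((Nat.coprime_primes Nat.prime_two Fact.out).2 hp.symm).pow_left 2
    exact_mod_cast PadicInt.isUnit_iff.2 (PadicInt.norm_natCast_eq_one_iff.2 coprime.symm)
  refine not_anisotropic_weightedSumSquares_of_dvd (i := 2) (y := ![s, t, 1]) (u 2).isUnit
    isUnit_one (four_unit.mul_left_dvd.2 (dvd_iff_toZMod_eq_zero.2 ?_))
  simp only [Fin.sum_univ_three, cons_val, map_add, map_mul, map_pow, map_one]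
  linear_combination hst

lemma two_dvd_add_of_isUnit {u v : ℤ_[2]} (hu : IsUnit u) (hv : IsUnit v) : 2 ∣ u + v := by
  have eq_one : ∀ x : ZMod 2, IsUnit x → x = 1 := by decide
  have : PadicInt.toZMod (u + v) = 0 := by
    rw [map_add, eq_one _ (hu.map PadicInt.toZMod), eq_one _ (hv.map PadicInt.toZMod)]
    rfl
  exact_mod_cast dvd_iff_toZMod_eq_zero.2 this

lemma two_dvd_mul_one_add_mul {u : ℤ_[2]} (hu : IsUnit u) (b : ℤ_[2]) : 2 ∣ b * (1 + u * b) := by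
  by_cases hb : IsUnit b
  · exact (two_dvd_add_of_isUnit isUnit_one (hu.mul hb)).mul_left b
  · have := (PadicInt.norm_lt_one_iff_dvd b).1 (PadicInt.not_isUnit_iff.1 hb)
    exact Dvd.dvd.mul_right (by exact_mod_cast this) _

lemma not_anisotropic_of_dyadic_units_two_mul_unit {u₁ u₂ u₃ u₄ : ℤ_[2]} (h₁ : IsUnit u₁)
    (h₂ : IsUnit u₂) (h₃ : IsUnit u₃) (h₄ : IsUnit u₄) :
    ¬ (weightedSumSquares ℤ_[2] ![u₁, u₂, u₃, 2 * u₄]).Anisotropic := by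
  obtain ⟨α, hα⟩ := two_dvd_add_of_isUnit h₁ h₂
  obtain ⟨β, hβ⟩ := two_dvd_mul_one_add_mul h₄ α
  obtain ⟨γ, hγ⟩ := two_dvd_mul_one_add_mul h₃ β
  refine not_anisotropic_weightedSumSquares_of_dvd (i := 0) (y := ![1, 1, 2 * β, α]) h₁ isUnit_one
    ⟨γ, ?_⟩
  simp only [Fin.sum_univ_four, cons_val, Nat.cast_ofNat]
  linear_combination hα + 2 * hβ + 4 * hγ

lemma not_anisotropic_of_dyadic_units {u : Fin 5 → ℤ_[2]} (hu : ∀ i, IsUnit (u i)) :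
    ¬ (weightedSumSquares ℤ_[2] u).Anisotropic := by
  obtain ⟨α, hα⟩ := two_dvd_add_of_isUnit (hu 0) (hu 1)
  by_cases hα' : IsUnit α
  · obtain ⟨x, hx, sum⟩ := not_anisotropic_weightedSumSquares_iff.1 <|
      not_anisotropic_of_dyadic_units_two_mul_unit (hu 2) (hu 3) (hu 4) hα'
    refine not_anisotropic_weightedSumSquares_iff.2 ⟨![x 3, x 3, x 0, x 1, x 2], fun h ↦ hx ?_, ?_⟩
    · exact funext fun i ↦ match i with
        | 0 => congrFun h 2
        | 1 => congrFun h 3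
        | 2 => congrFun h 4
        | 3 => congrFun h 0
    · simp only [Fin.sum_univ_four, Fin.sum_univ_five, cons_val] at sum ⊢
      linear_combination sum + x 3 ^ 2 * hα
  · obtain ⟨β, rfl⟩ : 2 ∣ α := by
      exact_mod_cast (PadicInt.norm_lt_one_iff_dvd α).1 (PadicInt.not_isUnit_iff.1 hα')
    obtain ⟨γ, hγ⟩ := two_dvd_mul_one_add_mul (hu 2) β
    refine not_anisotropic_weightedSumSquares_of_dvd (i := 0) (y := ![1, 1, 2 * β, 0, 0]) (hu 0)
      isUnit_one ⟨γ, ?_⟩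
    simp only [Fin.sum_univ_five, cons_val, Nat.cast_ofNat]
    linear_combination hα + 4 * hγ

lemma not_anisotropic_of_coe {b : ι → ℤ_[p]} (h : ¬ (weightedSumSquares ℤ_[p] b).Anisotropic) :
    ¬ (weightedSumSquares ℚ_[p] fun i ↦ (b i : ℚ_[p])).Anisotropic := by
  rw [not_anisotropic_weightedSumSquares_iff] at h ⊢
  obtain ⟨x, hx, sum⟩ := h
  obtain ⟨i, hi⟩ := Function.ne_iff.1 hx
  refine ⟨fun i ↦ x i, Function.ne_iff.2 ⟨i, PadicInt.coe_ne_zero.2 hi⟩, ?_⟩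
  simpa only [PadicInt.coe_sum, PadicInt.coe_mul, PadicInt.coe_pow, PadicInt.coe_zero] using
    congrArg ((↑) : ℤ_[p] → ℚ_[p]) sum

lemma not_anisotropic_ite_of_two_lt_card [DecidableEq ι] (hcard : 4 < Fintype.card ι)
    (u : ι → ℤ_[p]ˣ) {S : Finset ι} (hS : 2 < S.card) :
    ¬ (weightedSumSquares ℤ_[p] fun i ↦ if i ∈ S then (u i : ℤ_[p]) else p * u i).Anisotropic := by
  obtain ⟨g⟩ : Nonempty (Fin 3 ↪ S) := Function.Embedding.nonempty_of_card_le <| by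
    rwa [Fintype.card_fin, Fintype.card_coe]
  have g_inj : Function.Injective fun i ↦ (g i : ι) := Subtype.val_injective.comp g.injective
  by_cases hp : p = 2
  · subst hp
    by_cases hT : ∃ j, j ∉ S
    · obtain ⟨j, hj⟩ := hT
      refine not_anisotropic_weightedSumSquares_of_comp
        (g := Fin.snoc (α := fun _ ↦ ι) (fun i ↦ (g i : ι)) j) ?_ ?_
      · exact Fin.snoc_injective_iff.2 ⟨g_inj, by rintro ⟨i, rfl⟩; exact hj (g i).2⟩
      · convert not_anisotropic_of_dyadic_units_two_mul_unit (u (g 0)).isUnit (u (g 1)).isUnit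
          (u (g 2)).isUnit (u j).isUnit using 2
        refine congrArg _ (_root_.funext fun i ↦ ?_)
        match i with
        | 0 => exact if_pos (g 0).2
        | 1 => exact if_pos (g 1).2
        | 2 => exact if_pos (g 2).2
        | 3 => exact if_neg hj
    · push Not at hT
      obtain ⟨f⟩ : Nonempty (Fin 5 ↪ ι) := Function.Embedding.nonempty_of_card_le <| by
        rwa [Fintype.card_fin]
      refine not_anisotropic_weightedSumSquares_of_comp f.injective
        (not_anisotropic_of_dyadic_units fun i ↦ ?_)
      simp [hT]
  · refine not_anisotropic_weightedSumSquares_of_comp g_inj ?_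
    convert not_anisotropic_of_three_units hp fun i ↦ u (g i) using 2
    exact congrArg _ (_root_.funext fun i ↦ if_pos (g i).2)

lemma exists_eq_unit_mul_sq {a : ℚ_[p]} (ha : a ≠ 0) :
    ∃ u : ℤ_[p]ˣ, ∃ d : ℚ_[p], d ≠ 0 ∧ ((u : ℤ_[p]) * d ^ 2 = a ∨ p * (u : ℤ_[p]) * d ^ 2 = a) := by
  have p_ne : (p : ℚ_[p]) ≠ 0 := Nat.cast_ne_zero.2 (NeZero.ne p)
  have norm_one : ‖a * (p : ℚ_[p]) ^ (-a.valuation)‖ = 1 := by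
    rw [norm_mul, Padic.norm_eq_zpow_neg_valuation ha, Padic.norm_p_zpow, neg_neg,
      ← zpow_add₀ (Nat.cast_ne_zero.2 (NeZero.ne p)), neg_add_cancel, zpow_zero]
  have a_eq : a * (p : ℚ_[p]) ^ (-a.valuation) * (p : ℚ_[p]) ^ a.valuation = a := by
    rw [mul_assoc, ← zpow_add₀ p_ne, neg_add_cancel, zpow_zero, mul_one]
  obtain ⟨k, hk⟩ := Int.even_or_odd' a.valuation
  have sq_eq : ((p : ℚ_[p]) ^ k) ^ 2 = p ^ (2 * k) := by
    rw [← zpow_natCast, ← _root_.zpow_mul, Nat.cast_two, mul_comm]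
  refine ⟨PadicInt.mkUnits norm_one, p ^ k, zpow_ne_zero _ p_ne, hk.imp (fun hk ↦ ?_) fun hk ↦ ?_⟩
  · rw [PadicInt.mkUnits_eq, sq_eq, ← hk, a_eq]
  · rw [PadicInt.mkUnits_eq, mul_comm (p : ℚ_[p]), mul_assoc, sq_eq, ← zpow_one_add₀ p_ne,
      add_comm, ← hk, a_eq]

theorem not_anisotropic_weightedSumSquares_padic (hcard : 4 < Fintype.card ι) (a : ι → ℚ_[p]) :
    ¬ (weightedSumSquares ℚ_[p] a).Anisotropic := by
  classical
  by_cases! ha : ∃ i, a i = 0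
  · obtain ⟨i, hi⟩ := ha
    refine not_anisotropic_weightedSumSquares_iff.2 ⟨Pi.single i 1, by simp, ?_⟩
    simp [Pi.single_apply, hi]
  choose u d hd hu using fun i ↦ exists_eq_unit_mul_sq (ha i)
  have p_ne : (p : ℚ_[p]) ≠ 0 := Nat.cast_ne_zero.2 (NeZero.ne p)
  set S : Finset ι := {i | ((u i : ℤ_[p]) : ℚ_[p]) * d i ^ 2 = a i} with S_def
  have mem_S {i : ι} (hi : i ∈ S) : ((u i : ℤ_[p]) : ℚ_[p]) * d i ^ 2 = a i := by
    simpa [S_def] using hi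
  have notMem_S {i : ι} (hi : i ∉ S) : p * ((u i : ℤ_[p]) : ℚ_[p]) * d i ^ 2 = a i :=
    (hu i).resolve_left fun h ↦ hi (by simpa [S_def] using h)
  by_cases hS : 2 < S.card
  · refine not_anisotropic_weightedSumSquares_of_mul_sq one_ne_zero hd (fun i ↦ ?_)
      (not_anisotropic_of_coe (not_anisotropic_ite_of_two_lt_card hcard u hS))
    split_ifs with hi
    · rw [one_mul, mem_S hi]
    · rw [one_mul, PadicInt.coe_mul, PadicInt.coe_natCast, notMem_S hi]
  · have hS' : 2 < Sᶜ.card := by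
      rw [Finset.card_compl]
      lia
    refine not_anisotropic_weightedSumSquares_of_mul_sq (c := p)
      (d := fun i ↦ if i ∈ S then d i else p * d i) p_ne (fun i ↦ ?_) (fun i ↦ ?_)
      (not_anisotropic_of_coe (not_anisotropic_ite_of_two_lt_card hcard u hS'))
    · split_ifs
      exacts [hd i, mul_ne_zero p_ne (hd i)]
    · by_cases hi : i ∈ S
      · rw [if_neg (by simpa using hi), if_pos hi, PadicInt.coe_mul, PadicInt.coe_natCast,
          ← mem_S hi, mul_assoc]
      · rw [if_pos (by simpa using hi), if_neg hi, ← notMem_S hi]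
        ring

theorem not_anisotropic_padic {V : Type*} [AddCommGroup V] [Module ℚ_[p] V]
    (Q : QuadraticForm ℚ_[p] V) (hV : 4 < Module.finrank ℚ_[p] V) : ¬ Q.Anisotropic := by
  have : FiniteDimensional ℚ_[p] V := Module.finite_of_finrank_pos (by lia)
  have : Invertible (2 : ℚ_[p]) := invertibleOfNonzero two_ne_zero
  obtain ⟨w, ⟨e⟩⟩ := Q.equivalent_weightedSumSquares
  obtain ⟨x, hx, hzero⟩ := (not_anisotropic_iff_exists _).1 <|
    not_anisotropic_weightedSumSquares_padic (by simpa using hV) w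
  refine (not_anisotropic_iff_exists _).2 ⟨e.symm x, ?_, ?_⟩
  · simpa using hx
  · rw [e.symm.map_app, hzero]

end PadicIsotropy

section LocalSolvability

variable {ι : Type*} [Fintype ι]

lemma dotProduct_mulVec_self_add {A : Type*} [CommRing A] {M : Matrix ι ι A} (hM : M.IsSymm)
    (x y : ι → A) :
    (x + y) ⬝ᵥ M *ᵥ (x + y) = x ⬝ᵥ M *ᵥ x + 2 * (x ⬝ᵥ M *ᵥ y) + y ⬝ᵥ M *ᵥ y := by
  rw [mulVec_add, add_dotProduct, dotProduct_add, dotProduct_add, dotProduct_mulVec_comm hM y x]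
  ring

lemma exists_dotProduct_mulVec_add_eq_of_dvd {A : Type*} [CommRing A] {M : Matrix ι ι A}
    (hM : M.IsSymm) {e : ι → A} (he : e ⬝ᵥ M *ᵥ e = 0) (s : ι → A) {c : A} (x₀ : ι → A)
    (hdvd : 2 * (x₀ ⬝ᵥ M *ᵥ e) + e ⬝ᵥ s ∣ 2 * c) (f : A) :
    ∃ x : ι → A, x ⬝ᵥ M *ᵥ x + 2 * c * (x ⬝ᵥ s) = 4 * c ^ 2 * f := by
  obtain ⟨D, hD⟩ := hdvd
  set h := f - x₀ ⬝ᵥ M *ᵥ x₀ - x₀ ⬝ᵥ s with h_def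
  refine ⟨(2 * c) • x₀ + (D * h) • e, ?_⟩
  simp only [dotProduct_mulVec_self_add hM, mulVec_smul, smul_dotProduct, dotProduct_smul,
    add_dotProduct, smul_eq_mul, he]
  linear_combination -(2 * c * h) * hD + 4 * c ^ 2 * h_def

lemma exists_forall_dvd {κ A : Type*} [Finite κ] [Nonempty κ] [CommRing A] [IsDomain A]
    [ValuationRing A] (v : κ → A) : ∃ k, ∀ i, v k ∣ v i := by
  have : IsTrans A fun a b ↦ b ∣ a := ⟨fun _ _ _ h h' ↦ h'.trans h⟩
  have directed : Directed (fun a b ↦ b ∣ a) v := fun i j ↦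
    (ValuationRing.dvd_total (v i) (v j)).elim (fun h ↦ ⟨i, dvd_rfl, h⟩) fun h ↦ ⟨j, h, dvd_rfl⟩
  exact directed.finite_le id

lemma exists_padicInt_isotropic {p : ℕ} [Fact p.Prime] (hcard : 4 < Fintype.card ι)
    (M : Matrix ι ι ℤ_[p]) : ∃ (e : ι → ℤ_[p]) (j : ι), e ⬝ᵥ M *ᵥ e = 0 ∧ e j = 1 := by
  classical
  have : Nonempty ι := Fintype.card_pos_iff.1 (by lia)
  set φ : ℤ_[p] →+* ℚ_[p] := PadicInt.Coe.ringHom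
  obtain ⟨x, hx, hzero⟩ := (QuadraticMap.not_anisotropic_iff_exists _).1 <|
    not_anisotropic_padic (toBilin' (M.map φ)).toQuadraticMap (by simpa)
  rw [LinearMap.BilinMap.toQuadraticMap_apply, toBilin'_apply'] at hzero
  obtain ⟨j, hj⟩ := Finite.exists_max fun i ↦ ‖x i‖
  have xj_ne : x j ≠ 0 := fun h ↦ hx <| _root_.funext fun i ↦
    norm_le_zero_iff.1 ((hj i).trans (by rw [h, norm_zero]))
  have norm_le (i : ι) : ‖(x j)⁻¹ * x i‖ ≤ 1 := by
    rw [norm_mul, norm_inv]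
    exact inv_mul_le_one_of_le₀ (hj i) (norm_nonneg _)
  obtain ⟨e, he⟩ : ∃ e : ι → ℤ_[p], φ ∘ e = (x j)⁻¹ • x := ⟨fun i ↦ ⟨_, norm_le i⟩, rfl⟩
  have φ_inj : Function.Injective φ := Subtype.val_injective
  have map_mulVec : φ ∘ (M *ᵥ e) = M.map φ *ᵥ (φ ∘ e) := _root_.funext (φ.map_mulVec M e)
  refine ⟨e, j, φ_inj ?_, φ_inj ?_⟩
  · rw [φ.map_dotProduct, map_mulVec, he, mulVec_smul, smul_dotProduct, dotProduct_smul, hzero,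
      smul_zero, smul_zero, map_zero]
  · rw [map_one]
    exact (congrFun he j).trans (inv_mul_cancel₀ xj_ne)

lemma exists_pow_dvd_dotProduct_mulVec_sub {p : ℕ} [Fact p.Prime] {M : Matrix ι ι ℤ} {n : ℤ}
    {y : ι → ℤ_[p]} (hy : y ⬝ᵥ M.map (↑) *ᵥ y = n) (K : ℕ) :
    ∃ x : ι → ℤ, (p : ℤ) ^ K ∣ x ⬝ᵥ M *ᵥ x - n := by
  choose x hx using fun i ↦ ZMod.intCast_surjective (PadicInt.toZModPow K (y i))
  refine ⟨x, ?_⟩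
  rw [← Nat.cast_pow, ← ZMod.intCast_eq_intCast_iff_dvd_sub, intCast_dotProduct_mulVec,
    ← map_intCast (PadicInt.toZModPow K) n, ← hy]
  simp [dotProduct, mulVec, hx]

lemma dvd_dotProduct_mulVec_sub_of_intCast_eq {M : Matrix ι ι ℤ} {n : ℤ} {Q : ℕ} {x y : ι → ℤ}
    (hxy : ∀ i, (x i : ZMod Q) = y i) (hy : (Q : ℤ) ∣ y ⬝ᵥ M *ᵥ y - n) :
    (Q : ℤ) ∣ x ⬝ᵥ M *ᵥ x - n := by
  rw [← ZMod.intCast_eq_intCast_iff_dvd_sub] at hy ⊢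
  simp only [hy, intCast_dotProduct_mulVec, hxy]

lemma exists_dvd_dotProduct_mulVec_sub_of_prime_pow {M : Matrix ι ι ℤ} {n : ℤ}
    (h : ∀ p : ℕ, p.Prime → ∀ K, ∃ x : ι → ℤ, (p : ℤ) ^ K ∣ x ⬝ᵥ M *ᵥ x - n) {Q : ℕ} (hQ : 0 < Q) :
    ∃ x : ι → ℤ, (Q : ℤ) ∣ x ⬝ᵥ M *ᵥ x - n := by
  induction Q using Nat.recOnPosPrimePosCoprime with
  | prime_pow p K hp _ => exact_mod_cast h p hp K
  | zero => exact absurd hQ (lt_irrefl 0)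
  | one => exact ⟨0, one_dvd _⟩
  | coprime a b ha hb hab iha ihb =>
    obtain ⟨x, hx⟩ := iha (by lia)
    obtain ⟨y, hy⟩ := ihb (by lia)
    choose z hz using fun i ↦ ZMod.intCast_surjective
      ((ZMod.chineseRemainder hab).symm ((x i : ZMod a), (y i : ZMod b)))
    have hz (i : ι) : ((z i : ZMod a), (z i : ZMod b)) = ((x i : ZMod a), (y i : ZMod b)) := by
      rw [(RingEquiv.symm_apply_eq _).1 (hz i).symm, map_intCast]
      rfl
    refine ⟨z, ?_⟩
    rw [Nat.cast_mul]
    exact IsCoprime.mul_dvd (Nat.isCoprime_iff_coprime.2 hab)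
      (dvd_dotProduct_mulVec_sub_of_intCast_eq (fun i ↦ congrArg Prod.fst (hz i)) hx)
      (dvd_dotProduct_mulVec_sub_of_intCast_eq (fun i ↦ congrArg Prod.snd (hz i)) hy)

variable [DecidableEq ι]

lemma dotProduct_mulVec_self_add_adjugate_mulVec {A : Type*} [CommRing A] {M : Matrix ι ι A}
    (hM : M.IsSymm) (x s : ι → A) :
    (x + M.adjugate *ᵥ s) ⬝ᵥ M *ᵥ (x + M.adjugate *ᵥ s) =
      x ⬝ᵥ M *ᵥ x + 2 * M.det * (x ⬝ᵥ s) + M.adjugate *ᵥ s ⬝ᵥ M *ᵥ M.adjugate *ᵥ s := by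
  have mulVec_adjugate : M *ᵥ M.adjugate *ᵥ s = M.det • s := by
    rw [mulVec_mulVec, mul_adjugate, smul_mulVec, one_mulVec]
  rw [dotProduct_mulVec_self_add hM, mulVec_adjugate, dotProduct_smul, smul_eq_mul, mul_assoc]

lemma dvd_det_of_forall_dvd_mulVec {A : Type*} [CommRing A] {M : Matrix ι ι A} {e : ι → A} {j : ι}
    (hj : e j = 1) {g : A} (hg : ∀ i, g ∣ (M *ᵥ e) i) : g ∣ M.det := by
  have : (M.adjugate *ᵥ M *ᵥ e) j = M.det := by
    rw [mulVec_mulVec, adjugate_mul, smul_mulVec, one_mulVec, Pi.smul_apply, hj, smul_eq_mul,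
      mul_one]
  exact this ▸ Finset.dvd_sum fun i _ ↦ (hg i).mul_left _

/- Along `x₀ + t e` the isotropy of `e` makes the equation linear in `t`. Of the two choices
`x₀ = 0` and `x₀ = Pi.single k 1` one has a leading coefficient dividing `2 * M.det`. -/
lemma exists_dotProduct_mulVec_eq_of_isotropic {A : Type*} [CommRing A] [IsDomain A]
    [ValuationRing A] {M : Matrix ι ι A} (hM : M.IsSymm) {e : ι → A} {j : ι}
    (he : e ⬝ᵥ M *ᵥ e = 0) (hj : e j = 1) (s : ι → A) (f : A) :
    ∃ y : ι → A, y ⬝ᵥ M *ᵥ y =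
      M.adjugate *ᵥ s ⬝ᵥ M *ᵥ M.adjugate *ᵥ s + 4 * M.det ^ 2 * f := by
  have : Nonempty ι := ⟨j⟩
  obtain ⟨k, hk⟩ := exists_forall_dvd (M *ᵥ e)
  have dvd_det := dvd_det_of_forall_dvd_mulVec hj hk
  obtain ⟨x₀, hx₀⟩ : ∃ x₀ : ι → A, 2 * (x₀ ⬝ᵥ M *ᵥ e) + e ⬝ᵥ s ∣ 2 * M.det := by
    rcases ValuationRing.dvd_total (e ⬝ᵥ s) (2 * (M *ᵥ e) k + e ⬝ᵥ s) with h | h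
    · refine ⟨0, ?_⟩
      rw [zero_dotProduct, mul_zero, zero_add]
      exact ((dvd_add_left dvd_rfl).1 h).trans (mul_dvd_mul_left 2 dvd_det)
    · refine ⟨Pi.single k 1, ?_⟩
      rw [single_one_dotProduct]
      exact ((dvd_add_left h).1 dvd_rfl).trans (mul_dvd_mul_left 2 dvd_det)
  obtain ⟨x, hx⟩ := exists_dotProduct_mulVec_add_eq_of_dvd hM he s x₀ hx₀ f
  exact ⟨x + M.adjugate *ᵥ s, by
    rw [dotProduct_mulVec_self_add_adjugate_mulVec hM, hx, add_comm]⟩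

theorem exists_padicInt_dotProduct_mulVec_eq {p : ℕ} [Fact p.Prime] (hcard : 4 < Fintype.card ι)
    {M : Matrix ι ι ℤ_[p]} (hM : M.IsSymm) (s : ι → ℤ_[p]) (f : ℤ_[p]) :
    ∃ y : ι → ℤ_[p], y ⬝ᵥ M *ᵥ y =
      M.adjugate *ᵥ s ⬝ᵥ M *ᵥ M.adjugate *ᵥ s + 4 * M.det ^ 2 * f := by
  obtain ⟨e, j, he, hj⟩ := exists_padicInt_isotropic hcard M
  exact exists_dotProduct_mulVec_eq_of_isotropic hM he hj s f

theorem exists_dvd_dotProduct_mulVec_sub (hcard : 4 < Fintype.card ι) {M : Matrix ι ι ℤ}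
    (hM : M.IsSymm) (s : ι → ℤ) (f : ℤ) {Q : ℤ} (hQ : 0 < Q) :
    ∃ y : ι → ℤ, Q ∣ y ⬝ᵥ M *ᵥ y -
      (M.adjugate *ᵥ s ⬝ᵥ M *ᵥ M.adjugate *ᵥ s + 4 * M.det ^ 2 * f) := by
  lift Q to ℕ using hQ.le
  refine exists_dvd_dotProduct_mulVec_sub_of_prime_pow (fun p hp K ↦ ?_) (by exact_mod_cast hQ)
  have : Fact p.Prime := ⟨hp⟩
  obtain ⟨y, hy⟩ := exists_padicInt_dotProduct_mulVec_eq hcard (p := p)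
    (hM.map ((↑) : ℤ → ℤ_[p])) (fun i ↦ s i) f
  refine exists_pow_dvd_dotProduct_mulVec_sub (y := y) (hy.trans ?_) K
  have map_adjugate : (M.map ((↑) : ℤ → ℤ_[p])).adjugate = M.adjugate.map (↑) :=
    ((Int.castRingHom ℤ_[p]).map_adjugate M).symm
  have map_det : (M.map ((↑) : ℤ → ℤ_[p])).det = M.det := ((Int.castRingHom ℤ_[p]).map_det M).symm
  have map_mulVec : (fun i ↦ ((M.adjugate *ᵥ s) i : ℤ_[p])) =
      M.adjugate.map (↑) *ᵥ fun i ↦ (s i : ℤ_[p]) :=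
    _root_.funext ((Int.castRingHom ℤ_[p]).map_mulVec M.adjugate s)
  rw [map_adjugate, map_det, Int.cast_add, intCast_dotProduct_mulVec, map_mulVec]
  norm_cast

end LocalSolvability

section HomogeneousCone

variable {κ ι : Type*} [Fintype κ] [Fintype ι]

/- On the points `u / T` near `v` with `1 / T` near `0`, continuity keeps `f` above half of
`f (0, v)`. -/
lemma exists_forall_le_of_homogeneous {E : Type*} [NormedAddCommGroup E] [NormedSpace ℝ E]
    {f : ℝ × E → ℝ} {v : E} (hf : ContinuousAt f (0, v)) (hpos : 0 < f (0, v)) {d : ℕ}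
    (hhom : ∀ t : ℝ, 0 < t → ∀ p, f (t • p) = t ^ d * f p) :
    ∃ ε > 0, ∃ C > 0, ∀ T : ℝ, 1 ≤ ε * T → ∀ u, ‖u - T • v‖ ≤ ε * T → C * T ^ d ≤ f (1, u) := by
  obtain ⟨ε, hε, hball⟩ := Metric.nhds_basis_closedBall.eventually_iff.1
    (hf.eventually (lt_mem_nhds (half_lt_self hpos)))
  refine ⟨ε, hε, f (0, v) / 2, half_pos hpos, fun T hT u hu ↦ ?_⟩
  have T_pos : 0 < T := pos_of_mul_pos_right (zero_lt_one.trans_le hT) hε.le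
  have mem_ball : (T⁻¹, T⁻¹ • u) ∈ Metric.closedBall (0, v) ε := by
    rw [mem_closedBall_iff_norm, Prod.mk_sub_mk, Prod.norm_mk, sub_zero,
      ← inv_smul_smul₀ T_pos.ne' v, ← smul_sub, norm_smul, Real.norm_of_nonneg (by positivity),
      max_le_iff, inv_mul_le_iff₀ T_pos, inv_le_iff_one_le_mul₀ T_pos, mul_comm T]
    exact ⟨hT, hu⟩
  have rescale := hhom T T_pos (T⁻¹, T⁻¹ • u)
  rw [Prod.smul_mk, smul_eq_mul, mul_inv_cancel₀ T_pos.ne', smul_inv_smul₀ T_pos.ne'] at rescale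
  rw [rescale, mul_comm]
  exact mul_le_mul_of_nonneg_left (hball mem_ball).le (by positivity)

lemma exists_finset_int_dvd_sub {D : ℤ} (hD : 0 < D) {ρ : ℝ} (hρ : (D : ℝ) ≤ ρ) (a : ℝ) (t : ℤ) :
    ∃ S : Finset ℤ, ρ / D ≤ S.card ∧ ∀ x ∈ S, |(x : ℝ) - a| ≤ ρ ∧ D ∣ x - t := by
  have D_pos : (0 : ℝ) < D := mod_cast hD
  set l := (a - ρ - t) / D with l_def
  set u := (a + ρ - t) / D with u_def
  refine ⟨(Finset.Icc ⌈l⌉ ⌊u⌋).image fun j ↦ t + D * j, ?_, fun x hx ↦ ?_⟩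
  · have injective : Function.Injective fun j : ℤ ↦ t + D * j :=
      (add_right_injective t).comp (mul_right_injective₀ hD.ne')
    have self_le_toNat : ((⌊u⌋ + 1 - ⌈l⌉ : ℤ) : ℝ) ≤ (⌊u⌋ + 1 - ⌈l⌉).toNat :=
      mod_cast Int.self_le_toNat _
    have length : u - l = 2 * (ρ / D) := by rw [u_def, l_def]; ring
    have one_le : 1 ≤ ρ / D := (one_le_div₀ D_pos).2 hρ
    rw [Finset.card_image_of_injective _ injective, Int.card_Icc]
    push_cast at self_le_toNat
    linarith [Int.sub_one_lt_floor u, Int.ceil_lt_add_one l]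
  · obtain ⟨j, hj, rfl⟩ := Finset.mem_image.1 hx
    rw [Finset.mem_Icc, Int.ceil_le, Int.le_floor, div_le_iff₀ D_pos, le_div_iff₀ D_pos] at hj
    refine ⟨?_, j, by ring⟩
    push_cast
    exact abs_le.2 ⟨by linarith, by linarith⟩

lemma exists_finset_pi_int_dvd_sub {D : ℤ} (hD : 0 < D) {ρ : ℝ} (hρ : (D : ℝ) ≤ ρ) (a : ι → ℝ)
    (t : ι → ℤ) :
    ∃ S : Finset (ι → ℤ), (ρ / D) ^ Fintype.card ι ≤ S.card ∧
      ∀ x ∈ S, ‖Int.cast ∘ x - a‖ ≤ ρ ∧ ∀ i, D ∣ x i - t i := by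
  classical
  have D_pos : (0 : ℝ) < D := mod_cast hD
  choose S card_le hS using fun i ↦ exists_finset_int_dvd_sub hD hρ (a i) (t i)
  refine ⟨Fintype.piFinset S, ?_, fun x hx ↦ ?_⟩
  · rw [Fintype.card_piFinset, Nat.cast_prod, Fintype.card, ← Finset.prod_const]
    exact Finset.prod_le_prod (fun _ _ ↦ div_nonneg (D_pos.le.trans hρ) D_pos.le)
      fun i _ ↦ card_le i
  · have hx (i : ι) := hS i (x i) (Fintype.mem_piFinset.1 hx i)
    exact ⟨(pi_norm_le_iff_of_nonneg (D_pos.le.trans hρ)).2 fun i ↦ (hx i).1, fun i ↦ (hx i).2⟩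

lemma exists_finset_prod_pi_int_dvd_sub {D : ℤ} (hD : 0 < D) {ρ : ℝ} (hρ : (D : ℝ) ≤ ρ)
    (a : (κ → ℝ) × (ι → ℝ)) (t : (κ → ℤ) × (ι → ℤ)) :
    ∃ S : Finset ((κ → ℤ) × (ι → ℤ)),
      (ρ / D) ^ (Fintype.card κ + Fintype.card ι) ≤ S.card ∧
      ∀ x ∈ S, ‖(Int.cast ∘ x.1, Int.cast ∘ x.2) - a‖ ≤ ρ ∧
        (∀ i, D ∣ x.1 i - t.1 i) ∧ ∀ j, D ∣ x.2 j - t.2 j := by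
  have ratio_nonneg : 0 ≤ ρ / D := by
    have : (0 : ℝ) < D := mod_cast hD
    exact div_nonneg (this.le.trans hρ) this.le
  obtain ⟨S, card_S, hS⟩ := exists_finset_pi_int_dvd_sub hD hρ a.1 t.1
  obtain ⟨S', card_S', hS'⟩ := exists_finset_pi_int_dvd_sub hD hρ a.2 t.2
  refine ⟨S ×ˢ S', ?_, fun x hx ↦ ?_⟩
  · rw [Finset.card_product, Nat.cast_mul, pow_add]
    gcongr
  · obtain ⟨h, h'⟩ := Finset.mem_product.1 hx
    exact ⟨max_le (hS _ h).1 (hS' _ h').1, (hS _ h).2, (hS' _ h').2⟩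

theorem exists_eventually_exists_finset_forall_le_of_homogeneous
    {f : ℝ × (κ → ℝ) × (ι → ℝ) → ℝ} {v : (κ → ℝ) × (ι → ℝ)} (hf : ContinuousAt f (0, v))
    (hpos : 0 < f (0, v)) {d : ℕ} (hhom : ∀ t : ℝ, 0 < t → ∀ p, f (t • p) = t ^ d * f p)
    {D : ℤ} (hD : 0 < D) (t : (κ → ℤ) × (ι → ℤ)) :
    ∃ c > 0, ∃ C > 0, ∀ᶠ B : ℝ in Filter.atTop, ∃ S : Finset ((κ → ℤ) × (ι → ℤ)),
      c * B ^ (Fintype.card κ + Fintype.card ι) ≤ S.card ∧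
      ∀ x ∈ S, (∀ i, |(x.1 i : ℝ)| ≤ B) ∧ (∀ j, |(x.2 j : ℝ)| ≤ B) ∧
        (∀ i, D ∣ x.1 i - t.1 i) ∧ (∀ j, D ∣ x.2 j - t.2 j) ∧
        C * B ^ d ≤ f (1, Int.cast ∘ x.1, Int.cast ∘ x.2) := by
  have : (0 : ℝ) < D := mod_cast hD
  obtain ⟨ε, hε, C, hC, hcone⟩ := exists_forall_le_of_homogeneous hf hpos hhom
  set δ := (ε + ‖v‖)⁻¹
  have hδ : 0 < δ := by positivity
  refine ⟨(ε * δ / D) ^ (Fintype.card κ + Fintype.card ι), by positivity, C * δ ^ d,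
    by positivity, ?_⟩
  have tendsto : Filter.Tendsto (fun B ↦ ε * (δ * B)) Filter.atTop Filter.atTop :=
    (Filter.tendsto_id.const_mul_atTop hδ).const_mul_atTop hε
  filter_upwards [tendsto.eventually_ge_atTop 1, tendsto.eventually_ge_atTop (D : ℝ),
    Filter.eventually_ge_atTop 0] with B one_le D_le B_nonneg
  obtain ⟨S, card_S, hS⟩ := exists_finset_prod_pi_int_dvd_sub hD D_le ((δ * B) • v) t
  refine ⟨S, ?_, fun x hx ↦ ?_⟩
  · rw [← mul_pow]
    exact (congrArg (· ^ _) (by ring)).trans_le card_S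
  · obtain ⟨near, hdvd⟩ := hS x hx
    have norm_le : ‖((Int.cast ∘ x.1, Int.cast ∘ x.2) : (κ → ℝ) × (ι → ℝ))‖ ≤ B := by
      refine (norm_le_norm_sub_add _ ((δ * B) • v)).trans ?_
      rw [norm_smul, Real.norm_of_nonneg (by positivity)]
      refine (add_le_add_left near _).trans_eq ?_
      linear_combination B * mul_inv_cancel₀ (ne_of_gt (by positivity : 0 < ε + ‖v‖))
    have norm_le := max_le_iff.1 norm_le
    refine ⟨fun i ↦ (norm_le_pi_norm _ i).trans norm_le.1,
      fun j ↦ (norm_le_pi_norm _ j).trans norm_le.2, hdvd.1, hdvd.2, ?_⟩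
    rw [mul_assoc, ← mul_pow]
    exact hcone _ one_le _ near

end HomogeneousCone

section ResidualCubic

lemma intCast_eval {σ A : Type*} [CommRing A] (v : σ → ℤ) (p : MvPolynomial σ ℤ) :
    ((eval v p : ℤ) : A) = aeval (Int.cast ∘ v : σ → A) p := by
  rw [← aeval_eq_eval]
  exact (aeval_algebraMap_apply A v p).symm

lemma aeval_smul_of_isHomogeneous {σ A B : Type*} [CommSemiring A] [CommSemiring B] [Algebra A B]
    {p : MvPolynomial σ A} {d : ℕ} (hp : p.IsHomogeneous d) (t : B) (v : σ → B) :
    aeval (t • v) p = t ^ d * aeval v p := by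
  rw [aeval_def, aeval_def, eval₂_eq, eval₂_eq, Finset.mul_sum]
  refine Finset.sum_congr rfl fun m hm ↦ ?_
  have degree_eq : ∑ i ∈ m.support, m i = d := by
    rw [← Finsupp.degree_apply, Finsupp.degree_eq_weight_one]
    exact hp (mem_support_iff.1 hm)
  simp only [Pi.smul_apply, smul_eq_mul, mul_pow, Finset.prod_mul_distrib,
    Finset.prod_pow_eq_pow_sum, degree_eq]
  ring

lemma continuous_aeval {σ A B : Type*} [CommSemiring A] [CommSemiring B] [Algebra A B]
    [TopologicalSpace B] [IsTopologicalSemiring B] (p : MvPolynomial σ A) :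
    Continuous fun v : σ → B ↦ aeval v p := by
  simpa only [eval_map, aeval_def] using (p.map (algebraMap A B)).continuous_eval

variable {κ : Type*} [Fintype κ] {H : ℕ} (q : κ → MvPolynomial (Fin (H + 1)) ℤ)
  (R : MvPolynomial (Fin (H + 1)) ℤ)

/-- The form `∑ wᵢ qᵢ(τ, z) - a R(τ, z)` at the point `(τ, w, z)`. For quadratic `q` and cubic `R`,
`a = Δ` gives the homogenization of the left side of (a), and `a = 4 Δ` that of the right side
of (b) less `Δ² F⁻¹(s(z))` and divided by `Δ`. -/
noncomputable def residualCubic (a : ℝ) (p : ℝ × (κ → ℝ) × (Fin H → ℝ)) : ℝ :=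
  ∑ i, p.2.1 i * aeval (Fin.cons p.1 p.2.2 : Fin (H + 1) → ℝ) (q i) -
    a * aeval (Fin.cons p.1 p.2.2 : Fin (H + 1) → ℝ) R

lemma intCast_residualCubic (a : ℤ) (w : κ → ℤ) (z : Fin H → ℤ) :
    ((∑ i, w i * eval (Fin.cons 1 z) (q i) - a * eval (Fin.cons 1 z) R : ℤ) : ℝ) =
      residualCubic q R a (1, Int.cast ∘ w, Int.cast ∘ z) := by
  simp [residualCubic, intCast_eval, Fin.comp_cons]

lemma continuous_residualCubic (a : ℝ) : Continuous (residualCubic q R a) := by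
  have continuous_cons : Continuous fun p : ℝ × (κ → ℝ) × (Fin H → ℝ) ↦
      (Fin.cons p.1 p.2.2 : Fin (H + 1) → ℝ) :=
    Continuous.finCons (A := fun _ ↦ ℝ) continuous_fst continuous_snd.snd
  have continuous_comp (f : MvPolynomial (Fin (H + 1)) ℤ) :=
    (continuous_aeval (B := ℝ) f).comp continuous_cons
  exact (continuous_finsetSum _ fun i _ ↦ (by fun_prop : Continuous _).mul
    (continuous_comp (q i))).sub (continuous_const.mul (continuous_comp R))

variable {q R}

lemma residualCubic_smul (hq : ∀ j, (q j).IsHomogeneous 2) (hR : R.IsHomogeneous 3) (a t : ℝ)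
    (p : ℝ × (κ → ℝ) × (Fin H → ℝ)) :
    residualCubic q R a (t • p) = t ^ 3 * residualCubic q R a p := by
  have cons_smul : (Fin.cons (t • p).1 (t • p).2.2 : Fin (H + 1) → ℝ) =
      t • (Fin.cons p.1 p.2.2 : Fin (H + 1) → ℝ) := (Fin.comp_cons (t • ·) p.1 p.2.2).symm
  rw [residualCubic, cons_smul, aeval_smul_of_isHomogeneous hR, residualCubic, mul_sub,
    Finset.mul_sum]
  refine congrArg₂ _ (Finset.sum_congr rfl fun i _ ↦ ?_) (by ring)
  rw [aeval_smul_of_isHomogeneous (hq i), Prod.smul_snd, Prod.smul_fst, Pi.smul_apply, smul_eq_mul]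
  ring

lemma exists_forall_residualCubic_pos (hR : R.IsHomogeneous 3)
    (halt : (∃ (z : Fin H → ℝ) (j : κ), aeval (Fin.cons (0 : ℝ) z : Fin (H + 1) → ℝ) (q j) ≠ 0) ∨
      ∃ z : Fin H → ℝ, aeval (Fin.cons (0 : ℝ) z : Fin (H + 1) → ℝ) R ≠ 0)
    {a b : ℝ} (ha : 0 < a) (hb : 0 < b) :
    ∃ v, 0 < residualCubic q R a (0, v) ∧ 0 < residualCubic q R b (0, v) := by
  classical
  rcases halt with ⟨z, j, hj⟩ | ⟨z, hz⟩
  · set u : ℝ := aeval (Fin.cons 0 z : Fin (H + 1) → ℝ) (q j) with hu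
    set ρ : ℝ := aeval (Fin.cons 0 z : Fin (H + 1) → ℝ) R with hρ
    have value (c t : ℝ) : residualCubic q R c (0, Pi.single j t, z) = t * u - c * ρ := by
      simp [residualCubic, Pi.single_apply, hu, hρ]
    refine ⟨(Pi.single j ((a * |ρ| + b * |ρ| + 1) / u), z), ?_⟩
    rw [value, value, div_mul_cancel₀ _ hj]
    constructor <;> nlinarith [le_abs_self ρ, abs_nonneg ρ]
  · obtain ⟨z, hz⟩ : ∃ z : Fin H → ℝ, aeval (Fin.cons 0 z : Fin (H + 1) → ℝ) R < 0 := by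
      rcases hz.lt_or_gt with neg | pos
      · exact ⟨z, neg⟩
      · refine ⟨-z, ?_⟩
        have cons_neg : (Fin.cons 0 (-z) : Fin (H + 1) → ℝ) = (-1 : ℝ) • Fin.cons 0 z := by
          ext i
          cases i using Fin.cases <;> simp
        rw [cons_neg, aeval_smul_of_isHomogeneous hR]
        linarith
    have value (c : ℝ) : residualCubic q R c (0, 0, z) =
        c * -aeval (Fin.cons 0 z : Fin (H + 1) → ℝ) R := by
      simp [residualCubic]
    refine ⟨(0, z), ?_⟩
    rw [value, value]
    exact ⟨mul_pos ha (neg_pos.2 hz), mul_pos hb (neg_pos.2 hz)⟩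

end ResidualCubic

section ShiftedQuadric

variable {ι κ : Type*} [Fintype ι] [Fintype κ] {H : ℕ}

theorem exists_eventually_exists_finset_forall_le {q : κ → MvPolynomial (Fin (H + 1)) ℤ}
    {R : MvPolynomial (Fin (H + 1)) ℤ} (hq : ∀ j, (q j).IsHomogeneous 2) (hR : R.IsHomogeneous 3)
    (halt : (∃ (z : Fin H → ℝ) (j : κ), aeval (Fin.cons (0 : ℝ) z) (q j) ≠ 0) ∨
      ∃ z : Fin H → ℝ, aeval (Fin.cons (0 : ℝ) z) R ≠ 0) {a b : ℤ} (ha : 0 < a) (hb : 0 < b)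
    {D : ℤ} (hD : 0 < D) (t : (κ → ℤ) × (Fin H → ℤ)) :
    ∃ c > 0, ∃ C > 0, ∀ᶠ B : ℝ in Filter.atTop, ∃ S : Finset ((κ → ℤ) × (Fin H → ℤ)),
      c * B ^ (Fintype.card κ + H) ≤ S.card ∧
      ∀ x ∈ S, (∀ i, |(x.1 i : ℝ)| ≤ B) ∧ (∀ j, |(x.2 j : ℝ)| ≤ B) ∧
        (∀ i, D ∣ x.1 i - t.1 i) ∧ (∀ j, D ∣ x.2 j - t.2 j) ∧
        C * B ^ 3 ≤ (∑ i, x.1 i * eval (Fin.cons 1 x.2) (q i) - a * eval (Fin.cons 1 x.2) R : ℤ) ∧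
        C * B ^ 3 ≤
          (∑ i, x.1 i * eval (Fin.cons 1 x.2) (q i) - b * eval (Fin.cons 1 x.2) R : ℤ) := by
  obtain ⟨v, hva, hvb⟩ := exists_forall_residualCubic_pos hR halt
    (Int.cast_pos (R := ℝ) |>.2 ha) (Int.cast_pos.2 hb)
  have continuous_min : Continuous fun p ↦ min (residualCubic q R a p) (residualCubic q R b p) :=
    (continuous_residualCubic q R a).min (continuous_residualCubic q R b)
  have hom (s : ℝ) (hs : 0 < s) (p : ℝ × (κ → ℝ) × (Fin H → ℝ)) :
      min (residualCubic q R a (s • p)) (residualCubic q R b (s • p)) =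
        s ^ 3 * min (residualCubic q R a p) (residualCubic q R b p) := by
    rw [residualCubic_smul hq hR, residualCubic_smul hq hR, mul_min_of_nonneg _ _ (by positivity)]
  obtain ⟨c, hc, C, hC, hlarge⟩ := exists_eventually_exists_finset_forall_le_of_homogeneous
    continuous_min.continuousAt (lt_min hva hvb)
    hom hD t
  refine ⟨c, hc, C, hC, hlarge.mono fun B ⟨S, card_S, hS⟩ ↦ ⟨S, ?_, fun x hx ↦ ?_⟩⟩
  · rwa [Fintype.card_fin] at card_S
  · obtain ⟨hw, hz, dvd_w, dvd_z, hle⟩ := hS x hx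
    refine ⟨hw, hz, dvd_w, dvd_z, ?_⟩
    rw [intCast_residualCubic, intCast_residualCubic]
    exact le_min_iff.1 hle

variable [DecidableEq ι]

lemma sq_det_mul_dotProduct_inv_mulVec {K : Type*} [Field K] {M : Matrix ι ι ℤ}
    (hdet : (M.det : K) ≠ 0) (s : ι → ℤ) :
    (M.det : K) ^ 2 * ((fun i ↦ (s i : K)) ⬝ᵥ (M.map ((↑) : ℤ → K))⁻¹ *ᵥ fun i ↦ (s i : K)) =
      (M.adjugate *ᵥ s ⬝ᵥ M *ᵥ M.adjugate *ᵥ s : ℤ) := by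
  have map_det : (M.map ((↑) : ℤ → K)).det = M.det := ((Int.castRingHom K).map_det M).symm
  have map_adjugate : (M.map ((↑) : ℤ → K)).adjugate = M.adjugate.map (↑) :=
    ((Int.castRingHom K).map_adjugate M).symm
  rw [mulVec_mulVec s M, mul_adjugate, smul_mulVec, one_mulVec, inv_def, map_det, map_adjugate,
    Ring.inverse_eq_inv', smul_mulVec, dotProduct_smul, dotProduct_smul,
    ← intCast_dotProduct_mulVec, dotProduct_comm s]
  push_cast [smul_eq_mul]
  field_simp [hdet]

lemma det_pos_of_posDef {M : Matrix ι ι ℤ} (hM : M.PosDef) : 0 < M.det := by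
  obtain ⟨b, ortho, b_pos, -⟩ := exists_orthogonal_int_basis hM
  have diag : of b * (M * (of b)ᵀ) = diagonal fun i ↦ b i ⬝ᵥ M *ᵥ b i := by
    ext i j
    obtain rfl | hij := eq_or_ne i j
    · rw [diagonal_apply_eq]
      rfl
    · rw [diagonal_apply_ne _ hij]
      exact ortho hij
  have det_eq := congrArg det diag
  rw [det_mul, det_mul, det_transpose, det_diagonal] at det_eq
  have prod_pos : 0 < ∏ i, b i ⬝ᵥ M *ᵥ b i := Finset.prod_pos fun i _ ↦ b_pos i
  exact pos_of_mul_pos_right (by linarith) (mul_self_nonneg (of b).det)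

/-- The integer `Δ² (F⁻¹(s(z)) - 4 R(1, z)) + Δ ∑ wᵢ qᵢ(1, z)` on the right side of (b), where
`s(z)` consists of the values of `q₀`; `Δ² F⁻¹(s)` is encoded as the integer `F((adj M) s)`. -/
noncomputable def representedInt (M : Matrix ι ι ℤ) (q₀ : ι → MvPolynomial (Fin (H + 1)) ℤ)
    (q : κ → MvPolynomial (Fin (H + 1)) ℤ) (R : MvPolynomial (Fin (H + 1)) ℤ)
    (x : (κ → ℤ) × (Fin H → ℤ)) : ℤ :=
  (M.adjugate *ᵥ fun i ↦ eval (Fin.cons 1 x.2) (q₀ i)) ⬝ᵥ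
      M *ᵥ M.adjugate *ᵥ (fun i ↦ eval (Fin.cons 1 x.2) (q₀ i)) +
    M.det * (∑ i, x.1 i * eval (Fin.cons 1 x.2) (q i) - 4 * M.det * eval (Fin.cons 1 x.2) R)

variable {M : Matrix ι ι ℤ} {q₀ : ι → MvPolynomial (Fin (H + 1)) ℤ}
  {q : κ → MvPolynomial (Fin (H + 1)) ℤ} {R : MvPolynomial (Fin (H + 1)) ℤ}
  {x t : (κ → ℤ) × (Fin H → ℤ)}

lemma dvd_representedInt_sub_representedInt {D : ℤ} (hw : ∀ i, D ∣ x.1 i - t.1 i)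
    (hz : ∀ j, D ∣ x.2 j - t.2 j) :
    D ∣ representedInt M q₀ q R x - representedInt M q₀ q R t := by
  have castw (i : κ) : (x.1 i : ZMod D.natAbs) = t.1 i :=
    ((ZMod.intCast_eq_intCast_iff_dvd_sub ..).2 (Int.natAbs_dvd.2 (hw i))).symm
  have castz : (Int.cast ∘ x.2 : Fin H → ZMod D.natAbs) = Int.cast ∘ t.2 :=
    _root_.funext fun j ↦
      ((ZMod.intCast_eq_intCast_iff_dvd_sub ..).2 (Int.natAbs_dvd.2 (hz j))).symm
  rw [← Int.natAbs_dvd, ← ZMod.intCast_eq_intCast_iff_dvd_sub]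
  simp [representedInt, dotProduct, mulVec, intCast_eval, Fin.comp_cons, castw, castz]

lemma le_representedInt (hM : M.PosDef) {n : ℤ} (hn : 0 ≤ n)
    (h : n ≤ ∑ i, x.1 i * eval (Fin.cons 1 x.2) (q i) - 4 * M.det * eval (Fin.cons 1 x.2) R) :
    n ≤ representedInt M q₀ q R x := by
  set s := M.adjugate *ᵥ fun i ↦ eval (Fin.cons 1 x.2) (q₀ i)
  have form_nonneg : 0 ≤ s ⬝ᵥ M *ᵥ s := by
    simpa using hM.posSemidef.dotProduct_mulVec_nonneg s
  exact (h.trans (le_mul_of_one_le_left (hn.trans h) (det_pos_of_posDef hM))).trans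
    (le_add_of_nonneg_left form_nonneg)

lemma exists_dvd_dotProduct_mulVec_sub_representedInt (hcard : 4 < Fintype.card ι)
    (hM : M.IsSymm) (ht : ∀ i, 4 * M.det ∣ t.1 i) {Q : ℤ} (hQ : 0 < Q) :
    ∃ y : ι → ℤ, Q ∣ y ⬝ᵥ M *ᵥ y - representedInt M q₀ q R t := by
  choose w hw using ht
  obtain ⟨y, hy⟩ := exists_dvd_dotProduct_mulVec_sub hcard hM
    (fun i ↦ eval (Fin.cons 1 t.2) (q₀ i))
    (∑ i, w i * eval (Fin.cons 1 t.2) (q i) - eval (Fin.cons 1 t.2) R) hQ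
  refine ⟨y, ?_⟩
  have sum_eq : ∑ i, t.1 i * eval (Fin.cons 1 t.2) (q i) =
      4 * M.det * ∑ i, w i * eval (Fin.cons 1 t.2) (q i) := by
    simp only [hw, mul_assoc, Finset.mul_sum]
  rw [representedInt, sum_eq]
  convert! hy using 3
  ring

theorem exists_forall_dvd_exists_dotProduct_mulVec_eq_representedInt
    (hcard : 4 < Fintype.card ι) (hM : M.PosDef) (hq : ∀ j, (q j).IsHomogeneous 2)
    (hR : R.IsHomogeneous 3)
    (halt : (∃ (z : Fin H → ℝ) (j : κ), aeval (Fin.cons (0 : ℝ) z) (q j) ≠ 0) ∨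
      ∃ z : Fin H → ℝ, aeval (Fin.cons (0 : ℝ) z) R ≠ 0) :
    ∃ D : ℤ, 0 < D ∧ ∃ (t : (κ → ℤ) × (Fin H → ℤ)) (N : ℤ), ∀ x : (κ → ℤ) × (Fin H → ℤ),
      (∀ i, D ∣ x.1 i - t.1 i) → (∀ j, D ∣ x.2 j - t.2 j) → N ≤ representedInt M q₀ q R x →
      ∃ y : ι → ℤ, y ⬝ᵥ M *ᵥ y = representedInt M q₀ q R x := by
  -- The count modulo `4 Δ` supplies a point `t` at which the equation is soluble locally.
  have Δ_pos : 0 < 4 * M.det := by linarith [det_pos_of_posDef hM]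
  obtain ⟨c, hc, C, hC, hlarge⟩ :=
    exists_eventually_exists_finset_forall_le hq hR halt Δ_pos Δ_pos Δ_pos 0
  obtain ⟨B, ⟨S, card_S, hS⟩, B_pos⟩ := (hlarge.and (Filter.eventually_gt_atTop 0)).exists
  obtain ⟨t, ht⟩ : S.Nonempty := Finset.card_pos.1 <| Nat.cast_pos.1 <|
    (by positivity : 0 < c * B ^ (Fintype.card κ + H)).trans_le card_S
  obtain ⟨-, -, dvd_t, -, le_t, -⟩ := hS t ht
  have cubic_pos := (by positivity : 0 < C * B ^ 3).trans_le le_t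
  have one_le : 1 ≤ representedInt M q₀ q R t :=
    le_representedInt hM zero_le_one (Int.cast_pos.1 cubic_pos)
  obtain ⟨D, hD, N, hN⟩ := exists_forall_dvd_sub_exists_dotProduct_mulVec_eq hM hcard
    (zero_lt_one.trans_le one_le).ne' fun Q hQ ↦
      exists_dvd_dotProduct_mulVec_sub_representedInt hcard
        (isHermitian_iff_isSymm.1 hM.isHermitian) (by simpa using dvd_t) hQ
  exact ⟨D, hD, t, N, fun x hw hz hx ↦ hN _ hx (dvd_representedInt_sub_representedInt hw hz)⟩

lemma exists_shifted_dotProduct_mulVec_eq (hdet : M.det ≠ 0)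
    (h : ∃ y : ι → ℤ, y ⬝ᵥ M *ᵥ y = representedInt M q₀ q R x) :
    ∃ y : ι → ℤ,
      (((y + M.adjugate *ᵥ fun i ↦ eval (Fin.cons 1 x.2) (q₀ i)) ⬝ᵥ
        M *ᵥ (y + M.adjugate *ᵥ fun i ↦ eval (Fin.cons 1 x.2) (q₀ i)) : ℤ) : ℚ) =
      (M.det : ℚ) ^ 2 *
          ((fun i ↦ (eval (Fin.cons 1 x.2) (q₀ i) : ℚ)) ⬝ᵥ
            (M.map ((↑) : ℤ → ℚ))⁻¹ *ᵥ (fun i ↦ (eval (Fin.cons 1 x.2) (q₀ i) : ℚ)) -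
          4 * (eval (Fin.cons 1 x.2) R : ℚ)) +
        (M.det : ℚ) * ((∑ i, x.1 i * eval (Fin.cons 1 x.2) (q i) : ℤ) : ℚ) := by
  obtain ⟨y, hy⟩ := h
  refine ⟨y - M.adjugate *ᵥ fun i ↦ eval (Fin.cons 1 x.2) (q₀ i), ?_⟩
  rw [sub_add_cancel, hy, mul_sub, sq_det_mul_dotProduct_inv_mulVec (Int.cast_ne_zero.2 hdet),
    representedInt]
  push_cast
  ring

end ShiftedQuadric

theorem stmt4_general {ι κ : Type*} [Fintype ι] [DecidableEq ι] [Fintype κ] {H : ℕ}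
    (hcard : 4 < Fintype.card ι) {M : Matrix ι ι ℤ} (hM : M.PosDef)
    (q₀ : ι → MvPolynomial (Fin (H + 1)) ℤ) {q : κ → MvPolynomial (Fin (H + 1)) ℤ}
    {R : MvPolynomial (Fin (H + 1)) ℤ} (hq : ∀ j, (q j).IsHomogeneous 2) (hR : R.IsHomogeneous 3)
    (halt : (∃ (z : Fin H → ℝ) (j : κ), aeval (Fin.cons (0 : ℝ) z) (q j) ≠ 0) ∨
      ∃ z : Fin H → ℝ, aeval (Fin.cons (0 : ℝ) z) R ≠ 0) :
    ∃ c > (0 : ℝ), ∃ B₀ ≥ 1, ∀ B : ℝ, B₀ ≤ B → ∃ 𝒞 : Finset ((κ → ℤ) × (Fin H → ℤ)),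
      c * B ^ (Fintype.card κ + H) ≤ (𝒞.card : ℝ) ∧
      ∀ wz ∈ 𝒞, (∀ i, (|wz.1 i| : ℝ) ≤ B) ∧ (∀ j, (|wz.2 j| : ℝ) ≤ B) ∧
        B ^ 2 / 4 ≤ ((∑ i, wz.1 i * eval (Fin.cons 1 wz.2) (q i) -
          M.det * eval (Fin.cons 1 wz.2) R : ℤ) : ℝ) ∧
        ∃ x : ι → ℤ,
          (((x + M.adjugate *ᵥ fun i ↦ eval (Fin.cons 1 wz.2) (q₀ i)) ⬝ᵥ
            M *ᵥ (x + M.adjugate *ᵥ fun i ↦ eval (Fin.cons 1 wz.2) (q₀ i)) : ℤ) : ℚ) =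
          (M.det : ℚ) ^ 2 *
              ((fun i ↦ (eval (Fin.cons 1 wz.2) (q₀ i) : ℚ)) ⬝ᵥ
                (M.map ((↑) : ℤ → ℚ))⁻¹ *ᵥ (fun i ↦ (eval (Fin.cons 1 wz.2) (q₀ i) : ℚ)) -
              4 * (eval (Fin.cons 1 wz.2) R : ℚ)) +
            (M.det : ℚ) * ((∑ i, wz.1 i * eval (Fin.cons 1 wz.2) (q i) : ℤ) : ℚ) := by
  have Δ_pos := det_pos_of_posDef hM
  obtain ⟨D, hD, t, N, hrep⟩ :=
    exists_forall_dvd_exists_dotProduct_mulVec_eq_representedInt (q₀ := q₀) hcard hM hq hR halt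
  obtain ⟨c, hc, C, hC, hlarge⟩ :=
    exists_eventually_exists_finset_forall_le hq hR halt Δ_pos (mul_pos four_pos Δ_pos) hD t
  have tendsto_linear : Filter.Tendsto (fun B ↦ C * B) Filter.atTop Filter.atTop :=
    Filter.tendsto_id.const_mul_atTop hC
  have tendsto_cubic : Filter.Tendsto (fun B ↦ C * B ^ 3) Filter.atTop Filter.atTop :=
    (Filter.tendsto_pow_atTop three_ne_zero).const_mul_atTop hC
  obtain ⟨B₀, one_le, hB₀⟩ := (Filter.atTop_basis' (1 : ℝ)).eventually_iff.1
    (hlarge.and ((tendsto_linear.eventually_ge_atTop 4⁻¹).and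
      (tendsto_cubic.eventually_ge_atTop (max N 0 : ℤ))))
  refine ⟨c, hc, B₀, one_le, fun B hB ↦ ?_⟩
  obtain ⟨⟨S, card_S, hS⟩, linear_le, cubic_le⟩ := hB₀ hB
  refine ⟨S, card_S, fun wz hwz ↦ ?_⟩
  obtain ⟨hw, hz, dvd_w, dvd_z, le_cubic, le_cubic'⟩ := hS wz hwz
  refine ⟨mod_cast hw, mod_cast hz, le_trans ?_ le_cubic,
    exists_shifted_dotProduct_mulVec_eq Δ_pos.ne' (hrep wz dvd_w dvd_z ?_)⟩
  · calc B ^ 2 / 4 = 4⁻¹ * B ^ 2 := by ring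
      _ ≤ C * B * B ^ 2 := by gcongr
      _ = C * B ^ 3 := by ring
  · exact (le_max_left N 0).trans
      (le_representedInt hM (le_max_right N 0) (Int.cast_le.1 (cubic_le.trans le_cubic')))

lemma posDef_of_forall_real_dotProduct_mulVec_pos {ι : Type*} [Fintype ι] {M : Matrix ι ι ℤ}
    (hM : M.IsSymm)
    (hpos : ∀ u : ι → ℝ, u ≠ 0 → 0 < u ⬝ᵥ (M.map ((↑) : ℤ → ℝ)).mulVec u) : M.PosDef := by
  refine PosDef.of_dotProduct_mulVec_pos (isHermitian_iff_isSymm.2 hM) fun u hu ↦ ?_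
  have cast_ne : (fun i ↦ (u i : ℝ)) ≠ 0 := fun h ↦
    hu (_root_.funext fun i ↦ Int.cast_eq_zero.1 (congrFun h i))
  rw [star_trivial, ← Int.cast_pos (R := ℝ), intCast_dotProduct_mulVec]
  exact hpos _ cast_ne

lemma mul_rpow_two_thirds_mul_le {c B x : ℝ} {d : ℕ} (hc : 0 ≤ c) (hB : 1 ≤ B) (hx : x = d) :
    c * B ^ ((2 : ℝ) / 3 * x) ≤ c * B ^ d := by
  rw [hx, ← Real.rpow_natCast B d]
  gcongr
  linarith [d.cast_nonneg (α := ℝ)]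

/-- (Here `h = H + 1`, `m = r + k`, `n = m + h`.) Under the divisibility
`y₁ ∣ q_i` for `i ≤ r` and one of the two nonvanishing alternatives, there is a set `𝒞` of
`≫ B^{(2/3)(n-r-1)}` integer points `(w,z)` in the box `[-B,B]^{n-r-1}` for which the shifted
quadric equation is soluble in integers and the relevant quantity exceeds `B²/4`. -/
theorem stmt4 (n H r k : ℕ) (hr5 : 5 ≤ r) (hn : n = r + k + H + 1)
    (M : Matrix (Fin r) (Fin r) ℤ) (hsym : M.IsSymm) (hdet : M.det ≠ 0)
    (hpos : ∀ u : Fin r → ℝ, u ≠ 0 → 0 < u ⬝ᵥ (M.map ((↑) : ℤ → ℝ)).mulVec u)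
    (q : Fin (r + k) → MvPolynomial (Fin (H + 1)) ℤ) (hq : ∀ j, (q j).IsHomogeneous 2)
    (R : MvPolynomial (Fin (H + 1)) ℤ) (hR : R.IsHomogeneous 3)
    (hdvd : ∀ i : Fin r, (X 0 : MvPolynomial (Fin (H + 1)) ℤ) ∣ q (Fin.castAdd k i))
    (halt : (0 < k ∧ ∃ (z : Fin H → ℝ) (j : Fin k),
        aeval (Fin.cons (0 : ℝ) z) (q (Fin.natAdd r j)) ≠ 0) ∨
      (k = 0 ∧ ∃ z : Fin H → ℝ, aeval (Fin.cons (0 : ℝ) z) R ≠ 0)) :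
    ∃ c > (0 : ℝ), ∃ B₀ : ℝ, ∀ B : ℝ, B₀ ≤ B →
      ∃ 𝒞 : Finset ((Fin k → ℤ) × (Fin H → ℤ)),
        c * B ^ ((2 : ℝ) / 3 * ((n : ℝ) - r - 1)) ≤ (𝒞.card : ℝ) ∧
        ∀ wz ∈ 𝒞,
          (∀ i, (|wz.1 i| : ℝ) ≤ B) ∧ (∀ j, (|wz.2 j| : ℝ) ≤ B) ∧
          B ^ 2 / 4 ≤ ((∑ i : Fin k, wz.1 i *
              eval (Fin.cons 1 wz.2) (q (Fin.natAdd r i))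
            - M.det * eval (Fin.cons 1 wz.2) R : ℤ) : ℝ) ∧
          ∃ x : Fin r → ℤ,
            (((x + M.adjugate.mulVec
                  (fun i : Fin r => eval (Fin.cons 1 wz.2) (q (Fin.castAdd k i))))
                ⬝ᵥ M.mulVec (x + M.adjugate.mulVec
                  (fun i : Fin r => eval (Fin.cons 1 wz.2) (q (Fin.castAdd k i)))) : ℤ) : ℚ)
            = (M.det : ℚ) ^ 2 *
                ((fun i : Fin r => (eval (Fin.cons 1 wz.2) (q (Fin.castAdd k i)) : ℚ))
                  ⬝ᵥ ((M.map ((↑) : ℤ → ℚ))⁻¹).mulVec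
                    (fun i : Fin r => (eval (Fin.cons 1 wz.2) (q (Fin.castAdd k i)) : ℚ))
                  - 4 * (eval (Fin.cons 1 wz.2) R : ℚ))
              + (M.det : ℚ) *
                ((∑ i : Fin k, wz.1 i *
                  eval (Fin.cons 1 wz.2) (q (Fin.natAdd r i)) : ℤ) : ℚ) := by
  obtain ⟨c, hc, B₀, hB₀, h⟩ := stmt4_general (by rwa [Fintype.card_fin])
    (posDef_of_forall_real_dotProduct_mulVec_pos hsym hpos) (fun i ↦ q (Fin.castAdd k i))
    (fun j ↦ hq (Fin.natAdd r j)) hR (halt.imp And.right And.right)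
  exact ⟨c, hc, B₀, fun B hB ↦ (h B hB).imp fun 𝒞 ↦ And.imp_left <|
    (mul_rpow_two_thirds_mul_le hc.le (hB₀.trans hB)
      (by push_cast [hn, Fintype.card_fin]; ring)).trans⟩
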